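/- arXiv:2407.10708 — 7 statements merged into one kernel-verified Lean document; each statement's English description precedes it below -/
import Mathlib

section
/- Fix integers q ≥ 1 and γ with 0 ≤ γ ≤ q-1, reals u > 0 and κ ∈ (0,∞), and for each integer d ≥ 2 a real K(d) < 0. If lim_{d→∞} (-K(d))·d = κ, then lim_{d→∞} P(d,q,γ,K(d),u) = ρ(u,q,γ,κ), where ρ(u,q,γ,κ) := ω_{γ+1}·(2π)^{-(γ+1)/2}·u^{q+1}·κ^{(γ+1)/2}·(∫_0^u e^{κs²/2}·s^{q-γ-1} ds)^{-1} · ∫_0^1 r^{q-γ-1} ∫_0^{1/r} v^q·exp(-(1/2)·u²·κ·v²·(1-r²)) dv dr; moreover ρ(u,q,γ,κ) ∈ (0,1) (critical phase of the phase transition). -/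
open Real MeasureTheory Filter Asymptotics

/-- Surface area `ω_n = 2 π^{n/2} / Γ(n/2)` of the Euclidean unit sphere in `ℝ^n`. -/
noncomputable def omegaS (n : ℕ) : ℝ := 2 * Real.pi ^ ((n : ℝ) / 2) / Real.Gamma ((n : ℝ) / 2)

/-- The constant `D(d,q,γ)`. -/
noncomputable def Dconst (d q γ : ℕ) : ℝ :=
  omegaS (γ + 1) * omegaS (q - γ) * omegaS (d - q) / (omegaS (d - q + γ + 1) * omegaS (d - γ))

/-- `R_K(x)`, the Euclidean (Beltrami–Klein) radius of a hyperbolic ball of radius `x`. -/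
noncomputable def RK (K x : ℝ) : ℝ :=
  Real.sinh (Real.sqrt (-K) * x) /
    (Real.sqrt (-K) * Real.sqrt (1 + Real.sinh (Real.sqrt (-K) * x) ^ 2))

/-- `C_K(d,m,u)`, the invariant measure of the `m`-flats meeting the ball of radius `u`. -/
noncomputable def Cconst (K : ℝ) (d m : ℕ) (u : ℝ) : ℝ :=
  omegaS (d - m) * Real.sqrt (-K) ^ (-(d : ℝ) + (m : ℝ) + 1) *
    ∫ r in (0:ℝ)..u,
      Real.cosh (Real.sqrt (-K) * r) ^ m * Real.sinh (Real.sqrt (-K) * r) ^ (d - m - 1)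

/-- `P(d,q,γ,K,u)`, the hyperbolic intersection probability of the random flats `E` and `L`. -/
noncomputable def Pprob (d q γ : ℕ) (K u : ℝ) : ℝ :=
  Dconst d q γ * omegaS (d - γ) / Cconst K d (d - q + γ) u *
    ∫ r in (0:ℝ)..(1 / Real.sqrt (-K)),
      r ^ ((q : ℝ) - (γ : ℝ) - 1) *
        ∫ z in (0:ℝ)..(min 1 (RK K u / r)),
          z ^ q * (1 - z ^ 2) ^ (((d : ℝ) - (q : ℝ)) / 2 - 1) *
            (1 + K * r ^ 2 * z ^ 2) ^ (-((d : ℝ) + 1) / 2)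

/-- `F_{K,u}(δ)`, the distribution function of the distance of `E ∩ L` to the origin. -/
noncomputable def Fdist (d q γ : ℕ) (K u δ : ℝ) : ℝ :=
  Dconst d q γ * omegaS (d - γ) / Cconst K d (d - q + γ) u *
    ∫ r in (0:ℝ)..(RK K δ),
      r ^ ((q : ℝ) - (γ : ℝ) - 1) *
        ∫ z in (0:ℝ)..(min 1 (RK K u / r)),
          z ^ q * (1 - z ^ 2) ^ (((d : ℝ) - (q : ℝ)) / 2 - 1) *
            (1 + K * r ^ 2 * z ^ 2) ^ (-((d : ℝ) + 1) / 2)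

/-- `f_{d,q,γ,K}(δ)`, the density of the distance of `E ∩ L` to the origin. -/
noncomputable def fdens (d q γ : ℕ) (K u δ : ℝ) : ℝ :=
  Dconst d q γ * omegaS (d - γ) / Cconst K d (d - q + γ) u *
    (RK K δ ^ ((q : ℝ) - (γ : ℝ) - 1) / Real.cosh (Real.sqrt (-K) * δ) ^ 2) *
    ∫ z in (0:ℝ)..(min 1 (RK K u / RK K δ)),
      z ^ q * (1 - z ^ 2) ^ (((d : ℝ) - (q : ℝ)) / 2 - 1) *
        (1 + K * RK K δ ^ 2 * z ^ 2) ^ (-((d : ℝ) + 1) / 2)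

/-- The limiting constant `ρ(u,q,γ,κ)` in the critical phase. -/
noncomputable def rhoConst (u : ℝ) (q γ : ℕ) (κ : ℝ) : ℝ :=
  omegaS (γ + 1) * (2 * Real.pi) ^ (-((γ : ℝ) + 1) / 2) * u ^ (q + 1) *
    κ ^ (((γ : ℝ) + 1) / 2) *
    (∫ s in (0:ℝ)..u, Real.exp (κ * s ^ 2 / 2) * s ^ ((q : ℝ) - (γ : ℝ) - 1))⁻¹ *
    ∫ r in (0:ℝ)..1,
      r ^ ((q : ℝ) - (γ : ℝ) - 1) *
        ∫ v in (0:ℝ)..(1 / r),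
          v ^ q * Real.exp (-(1 / 2) * u ^ 2 * κ * v ^ 2 * (1 - r ^ 2))


lemma aux_rpow_exp {ι : Type*} {l : Filter ι} {t b : ι → ℝ} {c : ℝ} (ht : Tendsto t l (nhds 0))
    (hb : Tendsto (fun i => t i * b i) l (nhds c)) :
    Tendsto (fun i => (1 + t i) ^ (b i)) l (nhds (Real.exp c)) := by
  have h1 : HasDerivAt (fun x : ℝ => Real.log (1 + x)) 1 0 := by
    have := (((hasDerivAt_id (0:ℝ)).const_add 1).log (by simp))
    simpa using this
  have h2 : Tendsto (fun i => dslope (fun x : ℝ => Real.log (1 + x)) 0 (t i)) l (nhds 1) := by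
    have h3 := (continuousAt_dslope_same.2 h1.differentiableAt).tendsto
    rw [dslope_same, h1.deriv] at h3
    exact h3.comp ht
  have h4 : Tendsto (fun i => Real.exp (dslope (fun x : ℝ => Real.log (1 + x)) 0 (t i) * (t i * b i))) l
      (nhds (Real.exp c)) := by
    have := (Real.continuous_exp.tendsto _).comp (h2.mul hb)
    simpa [Function.comp_def] using this
  refine h4.congr' ?_
  have h5 : ∀ᶠ i in l, -1 < t i := ht.eventually (lt_mem_nhds (by norm_num))
  filter_upwards [h5] with i hi
  rw [Real.rpow_def_of_pos (by linarith)]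
  congr 1
  have := sub_smul_dslope (fun x : ℝ => Real.log (1 + x)) 0 (t i)
  simp at this
  rw [← this]; ring

lemma aux_gamma_half : Tendsto (fun x : ℝ => Real.Gamma (x + 1/2) / (Real.Gamma x * x ^ (1/2 : ℝ)))
    atTop (nhds 1) := by
  have hlow : Tendsto (fun x : ℝ => Real.sqrt (1 - (1/2) / x)) atTop (nhds 1) := by
    have : Tendsto (fun x : ℝ => 1 - (1/2) / x) atTop (nhds (1 - 0)) :=
      tendsto_const_nhds.sub (tendsto_const_nhds.div_atTop tendsto_id)
    have := (Real.continuous_sqrt.tendsto _).comp this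
    simpa [Function.comp_def] using this
  have key : ∀ x : ℝ, 0 < x → Real.Gamma (x + 1/2) ^ 2 ≤ Real.Gamma x * Real.Gamma (x + 1) := by
    intro x hx
    have h := Real.Gamma_mul_add_mul_le_rpow_Gamma_mul_rpow_Gamma (s := x) (t := x+1) (a := 1/2) (b := 1/2)
      hx (by linarith) (by norm_num) (by norm_num) (by norm_num)
    have h1 := Real.Gamma_pos_of_pos hx
    have h2 := Real.Gamma_pos_of_pos (show 0 < x + 1 by linarith)
    rw [show 1/2 * x + 1/2 * (x+1) = x + 1/2 by ring, ← Real.sqrt_eq_rpow, ← Real.sqrt_eq_rpow] at h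
    have h3 := (Real.Gamma_pos_of_pos (show 0 < x + 1/2 by linarith)).le
    calc _ ≤ (√(Real.Gamma x) * √(Real.Gamma (x+1)))^2 := by gcongr
      _ = _ := by rw [mul_pow, Real.sq_sqrt h1.le, Real.sq_sqrt h2.le]
  refine tendsto_of_tendsto_of_tendsto_of_le_of_le' hlow tendsto_const_nhds ?_ ?_
  · filter_upwards [eventually_gt_atTop 1] with x hx
    have h0 := key (x - 1/2) (by linarith)
    have e := Real.Gamma_add_one (show x - 1/2 ≠ 0 by linarith)
    rw [show x - 1/2 + 1/2 = x by ring] at h0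
    rw [show x - 1/2 + 1 = x + 1/2 by ring] at h0 e
    have h1 := Real.Gamma_pos_of_pos (show 0 < x by linarith)
    have h2 := Real.Gamma_pos_of_pos (show 0 < x - 1/2 by linarith)
    have h3 := Real.Gamma_pos_of_pos (show 0 < x + 1/2 by linarith)
    rw [← Real.sqrt_eq_rpow]
    apply Real.sqrt_le_iff.2 ⟨by positivity, ?_⟩
    rw [div_pow, mul_pow, Real.sq_sqrt (by linarith), le_div_iff₀ (by positivity)]
    have : (1 - 1/2/x) * (Real.Gamma x ^ 2 * x) = (x - 1/2) * Real.Gamma x ^ 2 := by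
      field_simp
    rw [this]
    calc _ ≤ (x - 1/2) * (Real.Gamma (x - 1/2) * Real.Gamma (x + 1/2)) := by
          apply mul_le_mul_of_nonneg_left h0 (by linarith)
      _ = _ := by rw [e]; ring
  · filter_upwards [eventually_gt_atTop 1] with x hx
    have h0 := key x (by linarith)
    have h1 := Real.Gamma_pos_of_pos (show 0 < x by linarith)
    rw [Real.Gamma_add_one (by linarith)] at h0
    rw [← Real.sqrt_eq_rpow]
    have hs := Real.sq_sqrt (show 0 ≤ x by linarith)
    rw [div_le_one (by positivity)]
    refine (pow_le_pow_iff_left₀ (Real.Gamma_pos_of_pos (show 0 < x + 1/2 by linarith)).le (by positivity) two_ne_zero).1 ?_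
    rw [mul_pow, hs]; nlinarith

lemma aux_gamma (m : ℕ) : Tendsto (fun x : ℝ => Real.Gamma (x + (m:ℝ)/2) / (Real.Gamma x * x ^ ((m:ℝ)/2)))
    atTop (nhds 1) := by
  induction m with
  | zero =>
    apply tendsto_const_nhds.congr'
    filter_upwards [eventually_gt_atTop 0] with x hx
    have := Real.Gamma_pos_of_pos hx
    simp
    field_simp
  | succ m ih =>
    have h1 : Tendsto (fun x : ℝ => x + (m:ℝ)/2) atTop atTop := tendsto_atTop_add_const_right _ _ tendsto_id
    have h2 := aux_gamma_half.comp h1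
    have h3 : Tendsto (fun x : ℝ => (1 + ((m:ℝ)/2) / x) ^ (1/2:ℝ)) atTop (nhds 1) := by
      have : Tendsto (fun x : ℝ => 1 + ((m:ℝ)/2) / x) atTop (nhds (1 + 0)) :=
        tendsto_const_nhds.add (tendsto_const_nhds.div_atTop tendsto_id)
      have := this.rpow_const (p := 1/2) (by simp)
      simpa using this
    have h4 := (ih.mul h2).mul h3
    simp only [one_mul] at h4
    refine h4.congr' ?_
    filter_upwards [eventually_gt_atTop 0] with x hx
    have hm : (0:ℝ) ≤ m := Nat.cast_nonneg m
    have g1 := Real.Gamma_pos_of_pos hx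
    have g2 := Real.Gamma_pos_of_pos (show 0 < x + (m:ℝ)/2 by positivity)
    have e1 : (1 + ((m:ℝ)/2) / x) = (x + (m:ℝ)/2) / x := by field_simp
    rw [e1, Real.div_rpow (by positivity) hx.le]
    have e2 : x + (m:ℝ)/2 + 1/2 = x + ((m+1:ℕ):ℝ)/2 := by push_cast; ring
    have e3 : x ^ (((m+1:ℕ):ℝ)/2) = x ^ ((m:ℝ)/2) * x ^ (1/2:ℝ) := by
      rw [← Real.rpow_add hx]; push_cast; congr 1; ring
    simp only [Function.comp]
    rw [e2, e3]
    have p1 : 0 < x ^ (1/2:ℝ) := by positivity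
    have p2 : 0 < x ^ ((m:ℝ)/2) := by positivity
    have p3 : 0 < (x + (m:ℝ)/2) ^ (1/2:ℝ) := by positivity
    field_simp

lemma aux_omega (q m : ℕ) : Tendsto (fun d : ℕ => omegaS (d - q) / omegaS (d - q + m) / (d:ℝ) ^ ((m:ℝ)/2))
    atTop (nhds ((2 * Real.pi) ^ (-(m:ℝ)/2))) := by
  have h0 : Tendsto (fun d : ℕ => ((d:ℝ) - q)/2) atTop atTop :=
    (tendsto_atTop_add_const_right _ _ tendsto_natCast_atTop_atTop).atTop_div_const (by norm_num)
  have h1 := (aux_gamma m).comp h0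
  have h3 : Tendsto (fun d : ℕ => (1 - (q:ℝ) / d) ^ ((m:ℝ)/2)) atTop (nhds 1) := by
    have : Tendsto (fun x : ℕ => 1 - (q:ℝ) / x) atTop (nhds (1 - 0)) :=
      tendsto_const_nhds.sub (tendsto_const_nhds.div_atTop tendsto_natCast_atTop_atTop)
    have := this.rpow_const (p := (m:ℝ)/2) (by simp)
    simpa using this
  have h4 := (h1.mul h3).mul_const ((2 * Real.pi) ^ (-(m:ℝ)/2))
  simp only [one_mul] at h4
  refine h4.congr' ?_
  filter_upwards [eventually_gt_atTop q] with d hd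
  have hd' : (q:ℝ) < d := by exact_mod_cast hd
  have hd0 : (0:ℝ) < d := lt_of_le_of_lt (Nat.cast_nonneg q) hd'
  have hx : (0:ℝ) < (d:ℝ) - q := by linarith
  have hm : (0:ℝ) ≤ m := Nat.cast_nonneg m
  unfold omegaS
  push_cast [Nat.cast_sub hd.le]
  have g1 := Real.Gamma_pos_of_pos (show 0 < ((d:ℝ)-q)/2 by positivity)
  have g2 := Real.Gamma_pos_of_pos (show 0 < ((d:ℝ)-q)/2 + (m:ℝ)/2 by positivity)
  have pp := Real.pi_pos
  have e0 : (1 - (q:ℝ)/d) = ((d:ℝ) - q)/d := by field_simp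
  simp only [Function.comp]
  rw [e0, add_div ((d:ℝ)-q), Real.rpow_add pp, Real.div_rpow hx.le (by norm_num), Real.div_rpow hx.le hd0.le,
    neg_div, Real.rpow_neg (by positivity), Real.mul_rpow (by norm_num) pp.le]
  have p1 : 0 < ((d:ℝ) - q) ^ ((m:ℝ)/2) := by positivity
  have p2 : 0 < (d:ℝ) ^ ((m:ℝ)/2) := by positivity
  have p3 : 0 < π ^ ((m:ℝ)/2) := by positivity
  have p4 : 0 < (2:ℝ) ^ ((m:ℝ)/2) := by positivity
  have p5 : 0 < π ^ (((d:ℝ)-q)/2) := by positivity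
  field_simp

lemma aux_sinh {ι : Type*} {l : Filter ι} {k : ι → ℝ} (hk : Tendsto k l (nhds 0)) (hk0 : ∀ᶠ i in l, 0 < k i)
    (r : ℝ) : Tendsto (fun i => Real.sinh (k i * r) / k i) l (nhds r) := by
  have h1 : HasDerivAt (fun x : ℝ => Real.sinh (x * r)) r 0 := by
    have := ((hasDerivAt_id (0:ℝ)).mul_const r).sinh
    simpa using this
  have h2 : Tendsto (fun i => dslope (fun x : ℝ => Real.sinh (x * r)) 0 (k i)) l (nhds r) := by
    have h3 := (continuousAt_dslope_same.2 h1.differentiableAt).tendsto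
    rw [dslope_same, h1.deriv] at h3
    exact h3.comp hk
  refine h2.congr' ?_
  filter_upwards [hk0] with i hi
  have := sub_smul_dslope (fun x : ℝ => Real.sinh (x * r)) 0 (k i)
  simp at this
  rw [← this, mul_div_cancel_left₀ _ hi.ne']

lemma aux_C {u κ : ℝ} (hu : 0 < u) (a : ℕ) {k : ℕ → ℝ} {N : ℕ → ℕ}
    (hk : Tendsto k atTop (nhds 0)) (hk0 : ∀ᶠ i in atTop, 0 < k i)
    (hN : Tendsto (fun i => k i ^ 2 * (N i : ℝ)) atTop (nhds κ)) :
    Tendsto (fun i => ∫ r in (0:ℝ)..u, Real.cosh (k i * r) ^ (N i) * (Real.sinh (k i * r) / k i) ^ a) atTop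
      (nhds (∫ s in (0:ℝ)..u, Real.exp (κ * s ^ 2 / 2) * s ^ a)) := by
  have hsu := aux_sinh hk hk0 u
  apply intervalIntegral.tendsto_integral_filter_of_dominated_convergence
    (fun _ => Real.exp (u ^ 2 / 2 * (κ + 1)) * (u + 1) ^ a)
  · filter_upwards with i
    apply Continuous.aestronglyMeasurable
    fun_prop
  · filter_upwards [hk0, hN.eventually (gt_mem_nhds (lt_add_one κ)), hsu.eventually (gt_mem_nhds (lt_add_one u))]
      with i h0 h1 h2
    refine Eventually.of_forall fun r hr => ?_
    rw [Set.uIoc_of_le hu.le] at hr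
    have hr0 := hr.1
    have hs : 0 ≤ Real.sinh (k i * r) := Real.sinh_nonneg_iff.2 (by positivity)
    have hc := Real.cosh_pos (k i * r)
    rw [Real.norm_of_nonneg (by positivity)]
    gcongr
    · calc Real.cosh (k i * r) ^ N i ≤ Real.exp ((k i * r)^2/2) ^ N i := by
            gcongr; exact Real.cosh_le_exp_half_sq _
        _ = Real.exp ((r^2/2) * (k i ^ 2 * N i)) := by
            rw [← Real.exp_nat_mul]; congr 1; ring
        _ ≤ _ := by
            apply Real.exp_le_exp.2
            have := hr.2
            gcongr
    · refine le_trans ?_ h2.le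
      gcongr
      exact Real.sinh_le_sinh.2 (by have := hr.2; gcongr)
  · simp
  · refine Eventually.of_forall fun r hr => ?_
    have hsr := aux_sinh hk hk0 r
    refine Tendsto.mul ?_ (hsr.pow a)
    have h1 : Tendsto (fun i => Real.sinh (k i * r) ^ 2) atTop (nhds 0) := by
      have : Tendsto (fun i => (Real.sinh (k i * r) / k i) * k i) atTop (nhds (r * 0)) := hsr.mul hk
      have := this.pow 2
      simp only [mul_zero, ne_eq, OfNat.ofNat_ne_zero, not_false_eq_true, zero_pow] at this
      refine this.congr' ?_
      filter_upwards [hk0] with i hi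
      field_simp
    have h2 : Tendsto (fun i => Real.sinh (k i * r) ^ 2 * ((N i : ℝ)/2)) atTop (nhds (κ * r^2/2)) := by
      have := ((hsr.pow 2).mul hN).div_const 2
      rw [mul_comm (r^2)] at this
      refine this.congr' ?_
      filter_upwards [hk0] with i hi
      field_simp
    refine (aux_rpow_exp h1 h2).congr fun i => ?_
    rw [add_comm, ← Real.cosh_sq, ← Real.rpow_natCast, ← Real.rpow_natCast, ← Real.rpow_mul (Real.cosh_pos _).le]
    congr 1; push_cast; ring

lemma aux_ii {b : ℝ} (hb : 0 ≤ b) (g : ℝ → ℝ) :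
    ∫ v in (0:ℝ)..b, g v = ∫ v in Set.Ioi (0:ℝ), if v ≤ b then g v else 0 := by
  have : (fun v => if v ≤ b then g v else 0) = (Set.Iic b).indicator g := by
    ext v; simp [Set.indicator_apply]
  rw [this, setIntegral_indicator measurableSet_Iic, intervalIntegral.integral_of_le hb, Set.Ioi_inter_Iic]

lemma aux_gauss {c : ℝ} (hc : 0 < c) (n : ℕ) :
    IntegrableOn (fun v : ℝ => v ^ n * Real.exp (-c * v ^ 2)) (Set.Ioi 0) := by
  have := integrableOn_rpow_mul_exp_neg_mul_sq hc (s := (n:ℝ)) (by have := Nat.cast_nonneg (α := ℝ) n; linarith)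
  simpa using this

lemma aux_J {c : ℝ} (hc : 0 < c) (q a : ℕ) {T α β : ℕ → ℝ} (hT : Tendsto T atTop (nhds 0))
    (hT0 : ∀ᶠ i in atTop, 0 < T i) (hα : Tendsto (fun i => T i ^ 2 * α i) atTop (nhds c))
    (hβ : Tendsto (fun i => T i ^ 2 * β i) atTop (nhds c)) (hα0 : ∀ᶠ i in atTop, 0 ≤ α i)
    (hβ0 : ∀ᶠ i in atTop, 0 ≤ β i) :
    Tendsto (fun i => ∫ s in (0:ℝ)..1, s ^ a * ∫ v in Set.Ioi (0:ℝ),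
        if v ≤ min (1 / T i) (1 / s) then
          v ^ q * (1 - (T i * v) ^ 2) ^ (α i) * (1 - s ^ 2 * (T i * v) ^ 2) ^ (-β i) else 0)
      atTop (nhds (∫ s in (0:ℝ)..1, s ^ a * ∫ v in Set.Ioi (0:ℝ),
        if v ≤ 1 / s then v ^ q * Real.exp (-c * v ^ 2 * (1 - s ^ 2)) else 0)) := by
  have hexp : ∀ w : ℝ, Tendsto (fun i => (1 - w ^ 2 * T i ^ 2) ^ (-β i)) atTop
      (nhds (Real.exp (c * w ^ 2))) := by
    intro w
    have h1 : Tendsto (fun i => -(w ^ 2 * T i ^ 2)) atTop (nhds 0) := by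
      have := ((hT.pow 2).const_mul (w^2)).neg
      simpa using this
    have h2 : Tendsto (fun i => -(w ^ 2 * T i ^ 2) * (-β i)) atTop (nhds (c * w ^ 2)) := by
      refine (hβ.mul_const (w^2)).congr fun i => ?_
      ring
    simpa [sub_eq_add_neg] using aux_rpow_exp h1 h2
  have hexp2 : ∀ w : ℝ, Tendsto (fun i => (1 - w ^ 2 * T i ^ 2) ^ (α i)) atTop
      (nhds (Real.exp (-c * w ^ 2))) := by
    intro w
    have h1 : Tendsto (fun i => -(w ^ 2 * T i ^ 2)) atTop (nhds 0) := by
      have := ((hT.pow 2).const_mul (w^2)).neg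
      simpa using this
    have h2 : Tendsto (fun i => -(w ^ 2 * T i ^ 2) * (α i)) atTop (nhds (-c * w ^ 2)) := by
      have := (hα.mul_const (w^2)).neg
      rw [← neg_mul] at this
      refine this.congr fun i => ?_
      ring
    simpa [sub_eq_add_neg] using aux_rpow_exp h1 h2
  have hM := (hexp 1).eventually (gt_mem_nhds (lt_add_one _))
  set M := Real.exp (c * 1 ^ 2) + 1 with hMdef
  have hMpos : 0 < M := by positivity
  have hI : IntegrableOn (fun v : ℝ => (v ^ q * Real.exp (-(c/2) * v ^ 2)) * M) (Set.Ioi 0) :=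
    (aux_gauss (half_pos hc) q).mul_const M
  have hbound : ∀ᶠ i in atTop, ∀ s ∈ Set.Ioc (0:ℝ) 1, ∀ v ∈ Set.Ioi (0:ℝ),
      ‖(if v ≤ min (1 / T i) (1 / s) then
          v ^ q * (1 - (T i * v) ^ 2) ^ (α i) * (1 - s ^ 2 * (T i * v) ^ 2) ^ (-β i) else 0)‖ ≤
        (v ^ q * Real.exp (-(c/2) * v ^ 2)) * M := by
    filter_upwards [hM, hα0, hβ0, hT0, hα.eventually (lt_mem_nhds (half_lt_self hc)),
      hT.eventually (gt_mem_nhds one_pos)] with i hM hα0 hβ0 hT0 hαc hT1 s hs v hv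
    have hv0 : 0 < v := hv
    have hs0 := hs.1
    split_ifs with hcond
    · have hv1 : T i * v ≤ 1 := by
        have := hcond.trans (min_le_left _ _)
        rw [le_div_iff₀ hT0] at this; linarith
      have hv2 : s * v ≤ 1 := by
        have := hcond.trans (min_le_right _ _)
        rw [le_div_iff₀ hs0] at this; linarith
      have hTT : T i ^ 2 < 1 := by nlinarith
      have p1 : 0 ≤ 1 - (T i * v) ^ 2 := by nlinarith [mul_pos hT0 hv0]
      have p3 : s ^ 2 * (T i * v) ^ 2 ≤ T i ^ 2 := by
        have : (s * v) ^ 2 ≤ 1 := by nlinarith [mul_pos hs0 hv0]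
        calc _ = T i ^ 2 * (s * v) ^ 2 := by ring
          _ ≤ T i ^ 2 * 1 := by gcongr
          _ = _ := by ring
      have p2 : 0 < 1 - s ^ 2 * (T i * v) ^ 2 := by linarith
      rw [Real.norm_of_nonneg (by positivity)]
      gcongr
      · calc (1 - (T i * v) ^ 2) ^ (α i) ≤ (Real.exp (-(T i * v) ^ 2)) ^ (α i) := by
              gcongr
              have := Real.add_one_le_exp (-(T i * v) ^ 2)
              linarith
          _ = Real.exp (-(T i ^ 2 * α i * v ^ 2)) := by
              rw [← Real.exp_mul]; congr 1; ring
          _ ≤ _ := by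
              apply Real.exp_le_exp.2
              have : c/2 * v^2 ≤ T i ^ 2 * α i * v ^ 2 := by gcongr
              linarith
      · refine le_trans ?_ hM.le
        apply Real.rpow_le_rpow_of_nonpos
        · linarith
        · linarith
        · linarith
    · simp only [norm_zero]; positivity
  have hmeas : ∀ i, StronglyMeasurable (fun s : ℝ => ∫ v in Set.Ioi (0:ℝ),
        if v ≤ min (1 / T i) (1 / s) then
          v ^ q * (1 - (T i * v) ^ 2) ^ (α i) * (1 - s ^ 2 * (T i * v) ^ 2) ^ (-β i) else 0) := by
    intro i
    have : Measurable (fun p : ℝ × ℝ => if p.2 ≤ min (1 / T i) (1 / p.1) then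
          p.2 ^ q * (1 - (T i * p.2) ^ 2) ^ (α i) * (1 - p.1 ^ 2 * (T i * p.2) ^ 2) ^ (-β i) else 0) := by
      refine Measurable.ite (measurableSet_le (by fun_prop) (by fun_prop)) (by fun_prop) (by fun_prop)
    exact this.stronglyMeasurable.integral_prod_right'
  apply intervalIntegral.tendsto_integral_filter_of_dominated_convergence
    (fun _ => ∫ v in Set.Ioi (0:ℝ), (v ^ q * Real.exp (-(c/2) * v ^ 2)) * M)
  · filter_upwards with i
    exact (StronglyMeasurable.mul (by fun_prop) (hmeas i)).aestronglyMeasurable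
  · filter_upwards [hbound] with i hi
    refine Eventually.of_forall fun s hs => ?_
    rw [Set.uIoc_of_le zero_le_one] at hs
    have h1 : ‖s ^ a‖ ≤ 1 := by
      rw [Real.norm_of_nonneg (pow_nonneg hs.1.le _)]
      exact pow_le_one₀ hs.1.le hs.2
    rw [norm_mul]
    calc _ ≤ 1 * _ := mul_le_mul_of_nonneg_right h1 (norm_nonneg _)
      _ ≤ _ := by
        rw [one_mul]
        apply norm_integral_le_of_norm_le hI
        exact (ae_restrict_iff' measurableSet_Ioi).2 (Eventually.of_forall fun v hv => hi s hs v hv)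
  · simp
  · refine Eventually.of_forall fun s hs => ?_
    rw [Set.uIoc_of_le zero_le_one] at hs
    refine Tendsto.const_mul _ ?_
    apply tendsto_integral_filter_of_dominated_convergence
      (fun v => (v ^ q * Real.exp (-(c/2) * v ^ 2)) * M)
    · filter_upwards with i
      apply Measurable.aestronglyMeasurable
      exact Measurable.ite (measurableSet_le (by fun_prop) (by fun_prop)) (by fun_prop) (by fun_prop)
    · filter_upwards [hbound] with i hi
      exact (ae_restrict_iff' measurableSet_Ioi).2 (Eventually.of_forall fun v hv => hi s hs v hv)
    · exact hI
    · refine (ae_restrict_iff' measurableSet_Ioi).2 (Eventually.of_forall fun v hv => ?_)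
      have hv0 : 0 < v := hv
      have hev : ∀ᶠ i in atTop, v ≤ 1 / T i := by
        filter_upwards [hT0, hT.eventually (gt_mem_nhds (inv_pos.2 hv0))] with i h0 h1
        rw [le_div_iff₀ h0]
        calc v * T i ≤ v * v⁻¹ := by gcongr
          _ = 1 := mul_inv_cancel₀ hv0.ne'
      by_cases hvs : v ≤ 1 / s
      · rw [if_pos hvs]
        have h3 := ((hexp2 v).const_mul (v^q)).mul (hexp (s * v))
        have e : v ^ q * Real.exp (-c * v ^ 2) * Real.exp (c * (s * v) ^ 2)
            = v ^ q * Real.exp (-c * v ^ 2 * (1 - s ^ 2)) := by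
          rw [mul_assoc, ← Real.exp_add]; congr 2; ring
        rw [e] at h3
        refine h3.congr' ?_
        filter_upwards [hev] with i hi
        rw [if_pos (le_min hi hvs)]
        congr 2
        · congr 1; ring
        · ring
      · rw [if_neg hvs]
        refine tendsto_const_nhds.congr fun i => ?_
        rw [if_neg]
        intro h; exact hvs (h.trans (min_le_right _ _))

lemma aux_swap {c : ℝ} (hc : 0 < c) (γ a : ℕ) :
    ∫ s in (0:ℝ)..1, s ^ a * ∫ v in Set.Ioi (0:ℝ),
        (if v ≤ 1 / s then v ^ (γ + 1 + a) * Real.exp (-c * v ^ 2 * (1 - s ^ 2)) else 0)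
      = ∫ v in Set.Ioi (0:ℝ), (v ^ γ * Real.exp (-c * v ^ 2)) *
          ∫ t in (0:ℝ)..(min v 1), t ^ a * Real.exp (c * t ^ 2) := by
  rw [intervalIntegral.integral_of_le zero_le_one]
  simp_rw [← integral_const_mul]
  rw [integral_integral_swap]
  · refine setIntegral_congr_fun measurableSet_Ioi fun v hv => ?_
    have hv0 : 0 < v := hv
    have h1 : ∫ s in Set.Ioc (0:ℝ) 1, s ^ a *
        (if v ≤ 1 / s then v ^ (γ + 1 + a) * Real.exp (-c * v ^ 2 * (1 - s ^ 2)) else 0)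
        = ∫ s in Set.Ioc (0:ℝ) 1, (Set.Iic (1/v)).indicator (fun s => (v ^ γ * Real.exp (-c * v ^ 2)) *
           (v * ((v * s) ^ a * Real.exp (c * (v * s) ^ 2)))) s := by
      refine setIntegral_congr_fun measurableSet_Ioc fun s hs => ?_
      have hs0 := hs.1
      simp only [Set.indicator_apply, Set.mem_Iic]
      have hiff : v ≤ 1 / s ↔ s ≤ 1 / v := by
        rw [le_div_iff₀ hs0, le_div_iff₀ hv0, mul_comm]
      by_cases h : v ≤ 1 / s
      · rw [if_pos h, if_pos (hiff.1 h)]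
        have : Real.exp (-c * v ^ 2 * (1 - s ^ 2)) = Real.exp (-c * v ^ 2) * Real.exp (c * (v * s) ^ 2) := by
          rw [← Real.exp_add]; congr 1; ring
        rw [this]; ring
      · rw [if_neg h, if_neg (fun h' => h (hiff.2 h'))]; simp
    rw [h1, setIntegral_indicator measurableSet_Iic, Set.Ioc_inter_Iic,
      ← intervalIntegral.integral_of_le (by positivity), intervalIntegral.integral_const_mul,
      intervalIntegral.integral_const_mul]
    have h2 := intervalIntegral.smul_integral_comp_mul_left (a := 0) (b := min 1 (1/v))
      (fun t : ℝ => t ^ a * Real.exp (c * t ^ 2)) v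
    simp only [smul_eq_mul, mul_zero] at h2
    rw [h2]
    congr 2
    rw [mul_min_of_nonneg _ _ hv0.le]
    congr 1 <;> field_simp
  · have hb : Integrable (fun p : ℝ × ℝ => (Real.exp c) * (p.2 ^ (γ + 1 + a) * Real.exp (-c * p.2 ^ 2)))
        ((volume.restrict (Set.Ioc (0:ℝ) 1)).prod (volume.restrict (Set.Ioi (0:ℝ)))) :=
      Integrable.mul_prod (f := fun _ : ℝ => Real.exp c) (integrable_const _) (aux_gauss hc _)
    refine hb.mono' ?_ ?_
    · apply Measurable.aestronglyMeasurable
      refine Measurable.mul (by fun_prop) ?_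
      exact Measurable.ite (measurableSet_le (by fun_prop) (by fun_prop)) (by fun_prop) (by fun_prop)
    · rw [Measure.prod_restrict]
      refine (ae_restrict_iff' (measurableSet_Ioc.prod measurableSet_Ioi)).2 (Eventually.of_forall ?_)
      rintro ⟨s, v⟩ ⟨hs, hv⟩
      have hs0 : 0 < s := hs.1
      have hs1 : s ≤ 1 := hs.2
      have hv0 : 0 < v := hv
      simp only [Function.uncurry]
      split_ifs with h
      · rw [Real.norm_of_nonneg (by positivity)]
        have hv2 : v * s ≤ 1 := by rwa [le_div_iff₀ hs0] at h
        have e : Real.exp (-c * v ^ 2 * (1 - s ^ 2)) ≤ Real.exp c * Real.exp (-c * v ^ 2) := by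
          rw [← Real.exp_add]
          apply Real.exp_le_exp.2
          have : (v * s) ^ 2 ≤ 1 := by nlinarith [mul_pos hv0 hs0]
          nlinarith
        calc s ^ a * (v ^ (γ + 1 + a) * Real.exp (-c * v ^ 2 * (1 - s ^ 2)))
            ≤ 1 * (v ^ (γ + 1 + a) * (Real.exp c * Real.exp (-c * v ^ 2))) := by
              gcongr
              exact pow_le_one₀ hs0.le hs1
          _ = _ := by ring
      · simp only [mul_zero, norm_zero]; positivity

lemma aux_bounds {c : ℝ} (hc : 0 < c) (γ a : ℕ) :
    0 < (∫ v in Set.Ioi (0:ℝ), (v ^ γ * Real.exp (-c * v ^ 2)) *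
          ∫ t in (0:ℝ)..(min v 1), t ^ a * Real.exp (c * t ^ 2)) ∧
    (∫ v in Set.Ioi (0:ℝ), (v ^ γ * Real.exp (-c * v ^ 2)) *
          ∫ t in (0:ℝ)..(min v 1), t ^ a * Real.exp (c * t ^ 2)) <
      (∫ v in Set.Ioi (0:ℝ), (v ^ γ * Real.exp (-c * v ^ 2))) *
        ∫ t in (0:ℝ)..1, t ^ a * Real.exp (c * t ^ 2) := by
  have hcont : Continuous (fun t : ℝ => t ^ a * Real.exp (c * t ^ 2)) := by fun_prop
  have hii : ∀ x y : ℝ, IntervalIntegrable (fun t : ℝ => t ^ a * Real.exp (c * t ^ 2)) volume x y :=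
    fun x y => hcont.intervalIntegrable x y
  set H : ℝ → ℝ := fun x => ∫ t in (0:ℝ)..x, t ^ a * Real.exp (c * t ^ 2) with hH
  have hHc : Continuous H := intervalIntegral.continuous_primitive hii 0
  have hmono : ∀ x y : ℝ, 0 ≤ x → x < y → H x < H y := by
    intro x y hx hxy
    have h1 : H y - H x = ∫ t in x..y, t ^ a * Real.exp (c * t ^ 2) :=
      intervalIntegral.integral_interval_sub_left (hii _ _) (hii _ _)
    have h2 : 0 < ∫ t in x..y, t ^ a * Real.exp (c * t ^ 2) := by
      apply intervalIntegral.intervalIntegral_pos_of_pos_on (hii _ _) _ hxy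
      intro t ht
      have : 0 < t := lt_of_le_of_lt hx ht.1
      positivity
    linarith
  have hH0 : H 0 = 0 := by simp [hH]
  have hle : ∀ v : ℝ, 0 < v → 0 < H (min v 1) ∧ H (min v 1) ≤ H 1 := by
    intro v hv
    constructor
    · have := hmono 0 (min v 1) le_rfl (by positivity)
      rwa [hH0] at this
    · rcases lt_or_ge v 1 with h | h
      · rw [min_eq_left h.le]; exact (hmono v 1 hv.le h).le
      · rw [min_eq_right h]
  have hg := aux_gauss hc γ
  have hint : IntegrableOn (fun v : ℝ => (v ^ γ * Real.exp (-c * v ^ 2)) * H (min v 1)) (Set.Ioi 0) := by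
    refine (hg.mul_const (H 1)).mono' (Continuous.aestronglyMeasurable (by fun_prop)) ?_
    refine (ae_restrict_iff' measurableSet_Ioi).2 (Eventually.of_forall fun v hv => ?_)
    have hv0 : 0 < v := hv
    have := hle v hv0
    have h1 := this.1.le
    rw [Real.norm_of_nonneg (by positivity)]
    have := this.2
    gcongr
  have key : ∀ f : ℝ → ℝ, IntegrableOn f (Set.Ioi 0) → (∀ v, 0 < v → 0 ≤ f v) →
      (∀ v, 0 < v → v < 1 → 0 < f v) → 0 < ∫ v in Set.Ioi (0:ℝ), f v := by
    intro f hf h0 h1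
    rw [setIntegral_pos_iff_support_of_nonneg_ae _ hf]
    · refine lt_of_lt_of_le ?_ (measure_mono (s := Set.Ioo (0:ℝ) 1) ?_)
      · simp
      · intro v hv
        exact ⟨(h1 v hv.1 hv.2).ne', hv.1⟩
    · exact (ae_restrict_iff' measurableSet_Ioi).2 (Eventually.of_forall fun v hv => h0 v hv)
  constructor
  · apply key _ hint
    · intro v hv; have := (hle v hv).1; positivity
    · intro v hv _; have := (hle v hv).1; positivity
  · rw [← integral_mul_const, ← sub_pos, ← integral_sub (hg.mul_const _) hint]
    apply key
    · exact (hg.mul_const _).sub hint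
    · intro v hv
      have := (hle v hv).2
      have h2 : 0 < v ^ γ * Real.exp (-c * v ^ 2) := by positivity
      rw [← mul_sub]
      exact mul_nonneg h2.le (sub_nonneg.2 this)
    · intro v hv hv1
      have h2 : 0 < v ^ γ * Real.exp (-c * v ^ 2) := by positivity
      rw [← mul_sub]
      apply mul_pos h2
      rw [min_eq_left hv1.le]
      exact sub_pos.2 (hmono v 1 hv.le hv1)

lemma aux_omega_pos {n : ℕ} (hn : 0 < n) : 0 < omegaS n := by
  unfold omegaS
  have h : (0:ℝ) < n := by exact_mod_cast hn
  have := Real.Gamma_pos_of_pos (show (0:ℝ) < (n:ℝ)/2 by positivity)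
  have := Real.pi_pos
  positivity

lemma aux_rho_eq (u κ : ℝ) (γ a : ℕ) : rhoConst u (γ + 1 + a) γ κ =
    omegaS (γ + 1) * (2 * Real.pi) ^ (-((γ + 1 : ℕ) : ℝ) / 2) * κ ^ (((γ + 1 : ℕ) : ℝ) / 2) *
      u ^ (γ + 1 + a + 1) *
      (∫ s in (0:ℝ)..u, Real.exp (κ * s ^ 2 / 2) * s ^ a)⁻¹ *
      ∫ s in (0:ℝ)..1, s ^ a * ∫ v in Set.Ioi (0:ℝ),
        (if v ≤ 1 / s then v ^ (γ + 1 + a) * Real.exp (-(u ^ 2 * κ / 2) * v ^ 2 * (1 - s ^ 2)) else 0) := by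
  unfold rhoConst
  have e : ((γ + 1 + a : ℕ) : ℝ) - (γ : ℝ) - 1 = a := by push_cast; ring
  have e2 : ∫ r in (0:ℝ)..1, r ^ a *
        ∫ v in (0:ℝ)..(1 / r),
          v ^ (γ + 1 + a) * Real.exp (-(1 / 2) * u ^ 2 * κ * v ^ 2 * (1 - r ^ 2)) =
      ∫ s in (0:ℝ)..1, s ^ a * ∫ v in Set.Ioi (0:ℝ),
        (if v ≤ 1 / s then v ^ (γ + 1 + a) * Real.exp (-(u ^ 2 * κ / 2) * v ^ 2 * (1 - s ^ 2)) else 0) := by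
    apply intervalIntegral.integral_congr
    intro s hs
    rw [Set.uIcc_of_le zero_le_one] at hs
    have hs0 := hs.1
    simp only
    rw [← aux_ii (by positivity)]
    congr 2
    ext v
    congr 2
    ring
  simp only [e, Real.rpow_natCast]
  rw [e2]
  push_cast
  ring

lemma aux_rho_bounds {u κ : ℝ} (hu : 0 < u) (hκ : 0 < κ) (γ a : ℕ) :
    rhoConst u (γ + 1 + a) γ κ ∈ Set.Ioo (0:ℝ) 1 := by
  have hc : 0 < u ^ 2 * κ / 2 := by positivity
  obtain ⟨h1, h2⟩ := aux_bounds hc γ a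
  rw [aux_rho_eq, aux_swap hc]
  set W := ∫ v in Set.Ioi (0:ℝ), (v ^ γ * Real.exp (-(u ^ 2 * κ / 2) * v ^ 2)) *
          ∫ t in (0:ℝ)..(min v 1), t ^ a * Real.exp (u ^ 2 * κ / 2 * t ^ 2)
  have hS : ∫ s in (0:ℝ)..u, Real.exp (κ * s ^ 2 / 2) * s ^ a =
      u ^ (a + 1) * ∫ t in (0:ℝ)..1, t ^ a * Real.exp (u ^ 2 * κ / 2 * t ^ 2) := by
    have h := intervalIntegral.smul_integral_comp_mul_left (a := 0) (b := 1)
      (fun s : ℝ => Real.exp (κ * s ^ 2 / 2) * s ^ a) u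
    simp only [smul_eq_mul, mul_zero, mul_one] at h
    rw [← h, pow_succ', mul_assoc]
    congr 1
    rw [← intervalIntegral.integral_const_mul]
    apply intervalIntegral.integral_congr
    intro t _
    simp only
    rw [mul_pow, show κ * (u ^ 2 * t ^ 2) / 2 = u ^ 2 * κ / 2 * t ^ 2 by ring]
    ring
  have hG : ∫ v in Set.Ioi (0:ℝ), (v ^ γ * Real.exp (-(u ^ 2 * κ / 2) * v ^ 2)) =
      (u ^ 2 * κ / 2) ^ (-((γ:ℝ) + 1) / 2) * (1 / 2) * Real.Gamma (((γ:ℝ) + 1) / 2) := by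
    have h := integral_rpow_mul_exp_neg_mul_rpow (p := 2) (q := (γ:ℝ)) (b := u ^ 2 * κ / 2) two_pos
      (by have := Nat.cast_nonneg (α := ℝ) γ; linarith) hc
    simpa using h
  rw [hS]
  rw [hG] at h2
  set H := ∫ t in (0:ℝ)..1, t ^ a * Real.exp (u ^ 2 * κ / 2 * t ^ 2)
  have hH : 0 < H := by
    apply intervalIntegral.intervalIntegral_pos_of_pos_on
    · exact Continuous.intervalIntegrable (by fun_prop) _ _
    · intro t ht
      have := ht.1
      positivity
    · norm_num
  have hω := aux_omega_pos (Nat.succ_pos γ)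
  have hπ := Real.pi_pos
  refine ⟨by positivity, ?_⟩
  have hpos : 0 < omegaS (γ + 1) * (2 * Real.pi) ^ (-((γ + 1 : ℕ) : ℝ) / 2) * κ ^ (((γ + 1 : ℕ) : ℝ) / 2) *
      u ^ (γ + 1 + a + 1) * (u ^ (a + 1) * H)⁻¹ := by positivity
  refine lt_of_lt_of_eq (mul_lt_mul_of_pos_left h2 hpos) ?_
  unfold omegaS
  push_cast
  have g := Real.Gamma_pos_of_pos (show (0:ℝ) < ((γ:ℝ) + 1)/2 by positivity)
  have eu : (u ^ 2) ^ (((γ:ℝ) + 1)/2) = u ^ (γ + 1) := by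
    rw [← Real.rpow_natCast u 2, ← Real.rpow_mul hu.le, ← Real.rpow_natCast u]
    congr 1; push_cast; ring
  rw [neg_div, Real.rpow_neg (by positivity), Real.rpow_neg (by positivity),
    Real.div_rpow (by positivity) (by norm_num), Real.mul_rpow (by positivity) hκ.le,
    Real.mul_rpow (by norm_num) hπ.le, eu]
  have p2 : 0 < κ ^ (((γ:ℝ) + 1)/2) := by positivity
  have p3 : 0 < π ^ (((γ:ℝ) + 1)/2) := by positivity
  have p4 : 0 < (2:ℝ) ^ (((γ:ℝ) + 1)/2) := by positivity
  field_simp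
  ring

lemma aux_RK_pos {K u : ℝ} (hK : K < 0) (hu : 0 < u) : 0 < RK K u := by
  unfold RK
  have hk : 0 < √(-K) := Real.sqrt_pos.2 (by linarith)
  have := Real.sinh_pos_iff.2 (mul_pos hk hu)
  positivity

lemma aux_P {d γ a : ℕ} {K u : ℝ} (hK : K < 0) (hu : 0 < u) (hd : γ + 1 + a < d) :
    Pprob d (γ + 1 + a) γ K u =
      omegaS (γ + 1) * (omegaS (d - (γ + 1 + a)) / omegaS (d - (γ + 1 + a) + (γ + 1)) /
          (d:ℝ) ^ (((γ + 1 : ℕ) : ℝ) / 2)) * (-K * d) ^ (((γ + 1 : ℕ) : ℝ) / 2) *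
      RK K u ^ (γ + 1 + a + 1) *
      (∫ r in (0:ℝ)..u, Real.cosh (√(-K) * r) ^ (d - (γ + 1 + a) + γ) *
          (Real.sinh (√(-K) * r) / √(-K)) ^ a)⁻¹ *
      ∫ s in (0:ℝ)..1, s ^ a * ∫ v in Set.Ioi (0:ℝ),
        if v ≤ min (1 / (√(-K) * RK K u)) (1 / s) then
          v ^ (γ + 1 + a) * (1 - (√(-K) * RK K u * v) ^ 2) ^ (((d:ℝ) - ((γ + 1 + a : ℕ) : ℝ)) / 2 - 1) *
            (1 - s ^ 2 * (√(-K) * RK K u * v) ^ 2) ^ (-(((d:ℝ) + 1) / 2)) else 0 := by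
  have hk : 0 < √(-K) := Real.sqrt_pos.2 (by linarith)
  have hR := aux_RK_pos hK hu
  have hk2 : √(-K) ^ 2 = -K := Real.sq_sqrt (by linarith)
  have eK : K = -√(-K) ^ 2 := by linarith
  have e : ((γ + 1 + a : ℕ) : ℝ) - (γ : ℝ) - 1 = a := by push_cast; ring
  set k := √(-K) with hkdef
  set R := RK K u with hRdef
  have hT : 0 < k * R := by positivity
  have hJ : (∫ r in (0:ℝ)..(1 / k), r ^ a *
        ∫ z in (0:ℝ)..(min 1 (R / r)),
          z ^ (γ + 1 + a) * (1 - z ^ 2) ^ (((d : ℝ) - ((γ + 1 + a : ℕ) : ℝ)) / 2 - 1) *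
            (1 + K * r ^ 2 * z ^ 2) ^ (-((d : ℝ) + 1) / 2)) =
      (k⁻¹ ^ (a + 1) * (k * R) ^ (γ + 1 + a + 1)) * ∫ s in (0:ℝ)..1, s ^ a * ∫ v in Set.Ioi (0:ℝ),
        if v ≤ min (1 / (k * R)) (1 / s) then
          v ^ (γ + 1 + a) * (1 - (k * R * v) ^ 2) ^ (((d:ℝ) - ((γ + 1 + a : ℕ) : ℝ)) / 2 - 1) *
            (1 - s ^ 2 * (k * R * v) ^ 2) ^ (-(((d:ℝ) + 1) / 2)) else 0 := by
    have h := intervalIntegral.smul_integral_comp_mul_left (a := 0) (b := 1)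
      (fun r : ℝ => r ^ a *
        ∫ z in (0:ℝ)..(min 1 (R / r)),
          z ^ (γ + 1 + a) * (1 - z ^ 2) ^ (((d : ℝ) - ((γ + 1 + a : ℕ) : ℝ)) / 2 - 1) *
            (1 + K * r ^ 2 * z ^ 2) ^ (-((d : ℝ) + 1) / 2)) k⁻¹
    simp only [smul_eq_mul, mul_zero, mul_one] at h
    rw [one_div, ← h, ← intervalIntegral.integral_const_mul, ← intervalIntegral.integral_const_mul]
    rw [intervalIntegral.integral_of_le zero_le_one, intervalIntegral.integral_of_le zero_le_one]
    refine setIntegral_congr_fun measurableSet_Ioc fun s hs => ?_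
    have hs0 := hs.1
    have hb : min 1 (R / (k⁻¹ * s)) = (k * R) * min (1 / (k * R)) (1 / s) := by
      rw [mul_min_of_nonneg _ _ hT.le]
      congr 1 <;> field_simp
    have h3 := intervalIntegral.smul_integral_comp_mul_left (a := 0) (b := min (1 / (k * R)) (1 / s))
      (fun z : ℝ => z ^ (γ + 1 + a) * (1 - z ^ 2) ^ (((d : ℝ) - ((γ + 1 + a : ℕ) : ℝ)) / 2 - 1) *
            (1 + K * (k⁻¹ * s) ^ 2 * z ^ 2) ^ (-((d : ℝ) + 1) / 2)) (k * R)
    simp only [smul_eq_mul, mul_zero] at h3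
    rw [hb, ← h3, ← aux_ii (by positivity)]
    have h4 : ∀ v : ℝ, (k * R * v) ^ (γ + 1 + a) *
        (1 - (k * R * v) ^ 2) ^ (((d : ℝ) - ((γ + 1 + a : ℕ) : ℝ)) / 2 - 1) *
            (1 + K * (k⁻¹ * s) ^ 2 * (k * R * v) ^ 2) ^ (-((d : ℝ) + 1) / 2) =
        (k * R) ^ (γ + 1 + a) * (v ^ (γ + 1 + a) *
          (1 - (k * R * v) ^ 2) ^ (((d:ℝ) - ((γ + 1 + a : ℕ) : ℝ)) / 2 - 1) *
            (1 - s ^ 2 * (k * R * v) ^ 2) ^ (-(((d:ℝ) + 1) / 2))) := by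
      intro v
      have : K * (k⁻¹ * s) ^ 2 = - s ^ 2 := by
        rw [eK]; field_simp
      rw [this, mul_pow (k * R) v (γ + 1 + a), neg_div, neg_mul, ← sub_eq_add_neg]
      ring
    simp_rw [h4]
    rw [intervalIntegral.integral_const_mul]
    ring
  have hC : Cconst K d (d - (γ + 1 + a) + γ) u = omegaS (a + 1) *
      ∫ r in (0:ℝ)..u, Real.cosh (k * r) ^ (d - (γ + 1 + a) + γ) * (Real.sinh (k * r) / k) ^ a := by
    unfold Cconst
    have n1 : d - (d - (γ + 1 + a) + γ) = a + 1 := by omega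
    have n2 : -(d:ℝ) + ((d - (γ + 1 + a) + γ : ℕ) : ℝ) + 1 = -(a:ℝ) := by
      push_cast [Nat.cast_sub hd.le]; ring
    rw [n2, n1, ← hkdef, Real.rpow_neg hk.le, Real.rpow_natCast, mul_assoc,
      ← intervalIntegral.integral_const_mul]
    congr 2
    ext r
    rw [Nat.add_sub_cancel, div_pow]
    field_simp
  unfold Pprob
  simp only [e, Real.rpow_natCast]
  rw [hC, ← hkdef, ← hRdef, hJ]
  unfold Dconst
  have n3 : γ + 1 + a - γ = a + 1 := by omega
  rw [n3, ← add_assoc]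
  have w1 := aux_omega_pos (Nat.succ_pos a)
  have w2 := aux_omega_pos (show 0 < d - γ by omega)
  have w3 := aux_omega_pos (show 0 < d - (γ + 1 + a) + γ + 1 by omega)
  have hd0 : (0:ℝ) < d := by exact_mod_cast (by omega : 0 < d)
  have ek : (-K * (d:ℝ)) ^ (((γ + 1 : ℕ) : ℝ) / 2) = k ^ (γ + 1) * (d:ℝ) ^ (((γ + 1 : ℕ) : ℝ) / 2) := by
    rw [Real.mul_rpow (by linarith) hd0.le, ← hk2, ← Real.rpow_natCast k 2, ← Real.rpow_mul hk.le,
      ← Real.rpow_natCast k (γ + 1)]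
    congr 2; push_cast; ring
  rw [ek]
  have p1 : 0 < (d:ℝ) ^ (((γ + 1 : ℕ) : ℝ) / 2) := by positivity
  generalize (d:ℝ) ^ (((γ + 1 : ℕ) : ℝ) / 2) = X at *
  rw [mul_pow k R, inv_pow, show k ^ (γ + 1 + a + 1) = k ^ (γ + 1) * k ^ (a + 1) by ring]
  generalize (∫ s in (0:ℝ)..1, s ^ a * ∫ v in Set.Ioi (0:ℝ), _) = J
  rw [Nat.succ_eq_add_one] at w1
  rw [div_eq_mul_inv _ (omegaS (a + 1) * _), mul_inv]
  generalize (∫ r in (0:ℝ)..u, Real.cosh (k * r) ^ (d - (γ + 1 + a) + γ) *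
    (Real.sinh (k * r) / k) ^ a)⁻¹ = Y
  field_simp

/-- critical phase, `-K(d)·d → κ ∈ (0,∞)` implies the intersection probability
tends to the constant `ρ(u,q,γ,κ)`, which lies strictly between 0 and 1. -/
theorem phase_transition_critical (q γ : ℕ) (hq : 1 ≤ q) (hγ : γ ≤ q - 1) (u κ : ℝ)
    (hu : 0 < u) (hκ : 0 < κ) (K : ℕ → ℝ) (hK : ∀ d : ℕ, 2 ≤ d → K d < 0)
    (h : Tendsto (fun d : ℕ => -K d * (d : ℝ)) atTop (nhds κ)) :
    Tendsto (fun d : ℕ => Pprob d q γ (K d) u) atTop (nhds (rhoConst u q γ κ)) ∧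
      rhoConst u q γ κ ∈ Set.Ioo (0 : ℝ) 1 := by
  obtain ⟨a, rfl⟩ : ∃ a, q = γ + 1 + a := ⟨q - (γ + 1), by omega⟩
  refine ⟨?_, aux_rho_bounds hu hκ γ a⟩
  have hdinf : Tendsto (fun d : ℕ => (d:ℝ)) atTop atTop := tendsto_natCast_atTop_atTop
  have hd2 : ∀ᶠ d : ℕ in atTop, 2 ≤ d := eventually_ge_atTop 2
  have hK0 : Tendsto (fun d => -K d) atTop (nhds 0) := by
    have := h.div_atTop hdinf
    refine this.congr' ?_
    filter_upwards [hd2] with d hd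
    have : (d:ℝ) ≠ 0 := by exact_mod_cast (by omega : d ≠ 0)
    field_simp
  set k : ℕ → ℝ := fun d => √(-K d) with hkdef
  have hk : Tendsto k atTop (nhds 0) := by
    have := (Real.continuous_sqrt.tendsto 0).comp hK0
    simpa [Function.comp_def] using this
  have hk0 : ∀ᶠ d in atTop, 0 < k d := by
    filter_upwards [hd2] with d hd
    exact Real.sqrt_pos.2 (by have := hK d hd; linarith)
  have hk2 : ∀ᶠ d in atTop, k d ^ 2 = -K d := by
    filter_upwards [hd2] with d hd
    exact Real.sq_sqrt (by have := hK d hd; linarith)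
  have hkd : Tendsto (fun d : ℕ => k d ^ 2 * (d:ℝ)) atTop (nhds κ) := by
    refine h.congr' ?_
    filter_upwards [hk2] with d hd
    rw [hd]
  -- affine exponents
  have haff : ∀ (x y : ℝ), Tendsto (fun d : ℕ => k d ^ 2 * (x * (d:ℝ) + y)) atTop (nhds (κ * x)) := by
    intro x y
    have h1 := (hkd.mul_const x).add ((hk.pow 2).mul_const y)
    simp only [ne_eq, OfNat.ofNat_ne_zero, not_false_eq_true, zero_pow, zero_mul, add_zero] at h1
    refine h1.congr fun d => ?_
    ring
  have hsu := aux_sinh hk hk0 u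
  have hR : Tendsto (fun d => RK (K d) u) atTop (nhds u) := by
    have h1 : Tendsto (fun d => √(1 + Real.sinh (k d * u) ^ 2)) atTop (nhds 1) := by
      have hc : Continuous (fun x : ℝ => √(1 + Real.sinh (x * u) ^ 2)) := by fun_prop
      have := (hc.tendsto 0).comp hk
      simpa [Function.comp_def] using this
    have h2 := hsu.div h1 one_ne_zero
    rw [div_one] at h2
    refine h2.congr fun d => ?_
    simp only [Pi.div_apply]
    rw [div_div]
    rfl
  have hT : Tendsto (fun d => k d * RK (K d) u) atTop (nhds 0) := by
    simpa using hk.mul hR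
  have hT0 : ∀ᶠ d in atTop, 0 < k d * RK (K d) u := by
    filter_upwards [hk0, hd2] with d h1 h2
    exact mul_pos h1 (aux_RK_pos (hK d h2) hu)
  have hTaff : ∀ y : ℝ, Tendsto (fun d : ℕ => (k d * RK (K d) u) ^ 2 * (1 / 2 * (d:ℝ) + y)) atTop
      (nhds (u ^ 2 * κ / 2)) := by
    intro y
    have h1 := (hR.pow 2).mul (haff (1/2) y)
    rw [show u ^ 2 * (κ * (1/2)) = u ^ 2 * κ / 2 by ring] at h1
    refine h1.congr fun d => ?_
    ring
  have hpos : ∀ y : ℝ, ∀ᶠ d : ℕ in atTop, 0 ≤ 1 / 2 * (d:ℝ) + y := by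
    intro y
    have : Tendsto (fun d : ℕ => 1 / 2 * (d:ℝ) + y) atTop atTop :=
      tendsto_atTop_add_const_right _ _ (hdinf.const_mul_atTop (by norm_num))
    exact this.eventually_ge_atTop 0
  have eα : ∀ d : ℕ, 1 / 2 * (d:ℝ) + (-((γ + 1 + a : ℕ) : ℝ) / 2 - 1) =
      ((d:ℝ) - ((γ + 1 + a : ℕ) : ℝ)) / 2 - 1 := fun d => by ring
  have eβ : ∀ d : ℕ, 1 / 2 * (d:ℝ) + 1 / 2 = ((d:ℝ) + 1) / 2 := fun d => by ring
  have hα := hTaff (-((γ + 1 + a : ℕ) : ℝ) / 2 - 1)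
  have hα0 := hpos (-((γ + 1 + a : ℕ) : ℝ) / 2 - 1)
  have hβ := hTaff (1 / 2)
  have hβ0 := hpos (1 / 2)
  simp only [eα] at hα hα0
  simp only [eβ] at hβ hβ0
  have hJ := aux_J (c := u ^ 2 * κ / 2) (by positivity) (γ + 1 + a) a hT hT0 hα hβ hα0 hβ0
  have hN : Tendsto (fun d : ℕ => k d ^ 2 * ((d - (γ + 1 + a) + γ : ℕ) : ℝ)) atTop (nhds κ) := by
    have := haff 1 (-(1 + a : ℝ))
    rw [mul_one] at this
    refine this.congr' ?_
    filter_upwards [eventually_ge_atTop (γ + 1 + a)] with d hd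
    push_cast [Nat.cast_sub hd]
    ring
  have hC := aux_C (κ := κ) hu a (N := fun d => d - (γ + 1 + a) + γ) hk hk0 hN
  have hS : 0 < ∫ s in (0:ℝ)..u, Real.exp (κ * s ^ 2 / 2) * s ^ a := by
    apply intervalIntegral.intervalIntegral_pos_of_pos_on
    · exact Continuous.intervalIntegrable (by fun_prop) _ _
    · intro t ht
      have := ht.1
      positivity
    · exact hu
  have hfin := (((((aux_omega (γ + 1 + a) (γ + 1)).const_mul (omegaS (γ + 1))).mul
    (h.rpow_const (p := ((γ + 1 : ℕ) : ℝ) / 2) (Or.inl hκ.ne'))).mul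
    (hR.pow (γ + 1 + a + 1))).mul (hC.inv₀ hS.ne')).mul hJ
  rw [aux_rho_eq]
  refine hfin.congr' ?_
  filter_upwards [hd2, eventually_gt_atTop (γ + 1 + a)] with d h1 h2
  rw [aux_P (hK d h1) hu h2]
end

section
/- Fix integers d ≥ 2, q with 1 ≤ q ≤ d-1, γ with 0 ≤ γ ≤ q-1, and reals K < 0, u > 0. Then for every δ > 0 one has F_{K,u}(δ) = ∫_0^δ f(s) ds, where f(s) := (D(d,q,γ)·ω_{d-γ}/C_K(d,d-q+γ,u)) · R_K(s)^{q-γ-1}·cosh^{-2}(√(-K)·s) · ∫_0^{min(1, R_K(u)/R_K(s))} z^q·(1-z²)^{(d-q)/2-1}·(1+K·R_K(s)²·z²)^{-(d+1)/2} dz. In particular, on (0,∞) the law of the distance d_K(o,E∩L) is absolutely continuous with density f. -/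
open Real MeasureTheory Filter Asymptotics

theorem RK_eq (K x : ℝ) : RK K x = Real.sinh (Real.sqrt (-K) * x) /
    (Real.sqrt (-K) * Real.cosh (Real.sqrt (-K) * x)) := by
  unfold RK
  rw [show 1 + Real.sinh (Real.sqrt (-K) * x) ^ 2 = Real.cosh (Real.sqrt (-K) * x) ^ 2 by
    rw [Real.cosh_sq]; ring, Real.sqrt_sq (Real.cosh_pos _).le]

theorem RK_hasDerivAt (K x : ℝ) (hK : K < 0) :
    HasDerivAt (RK K) (1 / Real.cosh (Real.sqrt (-K) * x) ^ 2) x := by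
  have ha : 0 < Real.sqrt (-K) := Real.sqrt_pos.2 (by linarith)
  rw [show RK K = fun x => Real.sinh (Real.sqrt (-K) * x) /
    (Real.sqrt (-K) * Real.cosh (Real.sqrt (-K) * x)) from funext (RK_eq K)]
  generalize Real.sqrt (-K) = a at *
  have hc := Real.cosh_pos (a * x)
  have h0 : HasDerivAt (fun x : ℝ => a * x) a x := by
    simpa using (hasDerivAt_id x).const_mul a
  have h := h0.sinh.div (h0.cosh.const_mul a) (mul_pos ha hc).ne'
  refine h.congr_deriv (Eq.symm ?_)
  have := Real.cosh_sq (a * x)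
  rw [div_eq_div_iff (pow_pos hc 2).ne' (pow_pos (mul_pos ha hc) 2).ne']
  linear_combination (-(a ^ 2 * Real.cosh (a * x) ^ 2)) * this

theorem RK_strictMono (K : ℝ) (hK : K < 0) : StrictMono (RK K) := by
  apply strictMono_of_deriv_pos
  intro x
  rw [(RK_hasDerivAt K x hK).deriv]
  have := Real.cosh_pos (Real.sqrt (-K) * x)
  positivity

theorem RK_image (K δ : ℝ) (hK : K < 0) (hδ : 0 < δ) :
    RK K '' Set.Ioc 0 δ = Set.Ioc 0 (RK K δ) := by
  have h0 : RK K 0 = 0 := by simp [RK]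
  have hm := RK_strictMono K hK
  apply Set.Subset.antisymm
  · rintro _ ⟨x, hx, rfl⟩
    exact ⟨h0 ▸ hm hx.1, hm.monotone hx.2⟩
  · have hc : ContinuousOn (RK K) (Set.Icc 0 δ) :=
      fun x _ => (RK_hasDerivAt K x hK).continuousAt.continuousWithinAt
    have := intermediate_value_Ioc hδ.le hc
    rwa [h0] at this

/-- the distribution function of the distance is the integral of the density,
i.e. on `(0,∞)` the law of the distance is absolutely continuous with density `f`. -/
theorem distribution_eq_integral_density (d q γ : ℕ) (hd : 2 ≤ d) (hq1 : 1 ≤ q)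
    (hq2 : q ≤ d - 1) (hγ : γ ≤ q - 1) (K u : ℝ) (hK : K < 0) (hu : 0 < u) :
    ∀ δ : ℝ, 0 < δ → Fdist d q γ K u δ = ∫ s in (0:ℝ)..δ, fdens d q γ K u s := by 
  intro δ hδ
  have hm := RK_strictMono K hK
  have h0 : RK K 0 = 0 := by simp [RK]
  have hp : 0 < RK K δ := h0 ▸ hm hδ
  unfold Fdist fdens
  rw [intervalIntegral.integral_of_le hp.le, intervalIntegral.integral_of_le hδ.le,
    ← RK_image K δ hK hδ, integral_image_eq_integral_abs_deriv_smul measurableSet_Ioc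
      (fun x _ => (RK_hasDerivAt K x hK).hasDerivWithinAt) hm.injective.injOn,
    ← integral_const_mul]
  refine setIntegral_congr_fun measurableSet_Ioc fun x _ => ?_
  have hc := Real.cosh_pos (Real.sqrt (-K) * x)
  simp only [smul_eq_mul]
  rw [abs_of_pos (by positivity)]
  ring
end

section
/- Fix integers d ≥ 2, q with 1 ≤ q ≤ d-1, γ with 0 ≤ γ ≤ q-1, and reals K < 0, u > 0, and let f be the density f_{d,q,γ,K} of the distance d_K(o,E∩L). Then for every real α > 0 the integral ∫_0^∞ δ^α · f(δ) dδ is finite; that is, all conditional positive moments E[d_K(o,E∩L)^α | d_K(o,E∩L) < ∞] are finite. -/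
open Real MeasureTheory Filter Asymptotics

theorem RK_pos {K x : ℝ} (hK : K < 0) (hx : 0 < x) : 0 < RK K x := by
  have hs : 0 < Real.sqrt (-K) := Real.sqrt_pos.2 (by linarith)
  have h1 : 0 < Real.sinh (Real.sqrt (-K) * x) := Real.sinh_pos_iff.2 (by positivity)
  unfold RK
  positivity

theorem RK_sq {K : ℝ} (x : ℝ) (hK : K < 0) :
    1 + K * RK K x ^ 2 = 1 / (1 + Real.sinh (Real.sqrt (-K) * x) ^ 2) := by
  have hs : Real.sqrt (-K) ^ 2 = -K := Real.sq_sqrt (by linarith)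
  have h0 : 0 < 1 + Real.sinh (Real.sqrt (-K) * x) ^ 2 := by positivity
  have hK0 : K ≠ 0 := hK.ne
  have ht := Real.sq_sqrt h0.le
  unfold RK
  rw [div_pow, mul_pow, hs, ht]
  field_simp
  ring

theorem RK_meas (K : ℝ) : Measurable (RK K) := by
  unfold RK
  have := Real.measurable_sinh
  fun_prop

theorem inner_meas (d q : ℕ) (K u : ℝ) : Measurable (fun δ : ℝ =>
    ∫ z in (0:ℝ)..(min 1 (RK K u / RK K δ)),
      z ^ q * (1 - z ^ 2) ^ (((d : ℝ) - (q : ℝ)) / 2 - 1) *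
        (1 + K * RK K δ ^ 2 * z ^ 2) ^ (-((d : ℝ) + 1) / 2)) := by
  have hR := RK_meas K
  have hg : Measurable (fun δ : ℝ => min 1 (RK K u / RK K δ)) := by fun_prop
  have hF : Measurable (fun p : ℝ × ℝ => p.2 ^ q * (1 - p.2 ^ 2) ^ (((d : ℝ) - (q : ℝ)) / 2 - 1) *
        (1 + K * RK K p.1 ^ 2 * p.2 ^ 2) ^ (-((d : ℝ) + 1) / 2)) := by fun_prop
  simp only [intervalIntegral]
  simp_rw [← integral_indicator measurableSet_Ioc]
  apply Measurable.sub
  · have hm : MeasurableSet {p : ℝ × ℝ | 0 < p.2 ∧ p.2 ≤ min 1 (RK K u / RK K p.1)} :=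
      (measurableSet_lt measurable_const measurable_snd).inter
        (measurableSet_le measurable_snd (hg.comp measurable_fst))
    exact ((hF.indicator hm).stronglyMeasurable.integral_prod_right' (ν := volume)).measurable
  · have hm : MeasurableSet {p : ℝ × ℝ | min 1 (RK K u / RK K p.1) < p.2 ∧ p.2 ≤ 0} :=
      (measurableSet_lt (hg.comp measurable_fst) measurable_snd).inter
        (measurableSet_le measurable_snd measurable_const)
    exact ((hF.indicator hm).stronglyMeasurable.integral_prod_right' (ν := volume)).measurable

theorem bd_int : IntervalIntegrable (fun z : ℝ => (1 - z) ^ (-(1/2) : ℝ) + 1) volume 0 1 := by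
  have h : IntervalIntegrable (fun z : ℝ => z ^ (-(1/2) : ℝ)) volume 1 0 :=
    intervalIntegral.intervalIntegrable_rpow' (by norm_num)
  have h2 := h.comp_sub_left 1
  simp only [sub_self, sub_zero] at h2
  exact h2.add intervalIntegrable_const

theorem inner_bd (d q : ℕ) (hqd : q + 1 ≤ d) (K u : ℝ) (hK : K < 0) (hu : 0 < u) :
    ∃ M : ℝ, ∀ δ : ℝ, 0 < δ → ‖∫ z in (0:ℝ)..(min 1 (RK K u / RK K δ)),
      z ^ q * (1 - z ^ 2) ^ (((d : ℝ) - (q : ℝ)) / 2 - 1) *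
        (1 + K * RK K δ ^ 2 * z ^ 2) ^ (-((d : ℝ) + 1) / 2)‖ ≤ M := by
  set c := 1 + K * RK K u ^ 2 with hc
  have hc0 : 0 < c := by rw [hc, RK_sq u hK]; positivity
  set C := c ^ (-((d : ℝ) + 1) / 2) with hC
  have hC0 : 0 < C := Real.rpow_pos_of_pos hc0 _
  have hb : IntervalIntegrable (fun z : ℝ => ((1 - z) ^ (-(1/2) : ℝ) + 1) * C) volume 0 1 :=
    bd_int.mul_const C
  refine ⟨∫ z in (0:ℝ)..1, ((1 - z) ^ (-(1/2) : ℝ) + 1) * C, fun δ hδ => ?_⟩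
  have hRu := RK_pos hK hu
  have hR := RK_pos hK hδ
  set m := min 1 (RK K u / RK K δ) with hm
  have hm0 : 0 ≤ m := le_min zero_le_one (by positivity)
  have hm1 : m ≤ 1 := min_le_left _ _
  have hb' : IntervalIntegrable (fun z : ℝ => ((1 - z) ^ (-(1/2) : ℝ) + 1) * C) volume 0 m :=
    hb.mono_set (by
      rw [Set.uIcc_of_le hm0, Set.uIcc_of_le zero_le_one]
      exact Set.Icc_subset_Icc_right hm1)
  refine (intervalIntegral.norm_integral_le_of_norm_le hm0 ?_ hb').trans ?_
  · refine Filter.Eventually.of_forall fun z hz => ?_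
    have hz0 : 0 < z := hz.1
    have hz1 : z ≤ 1 := hz.2.trans hm1
    have hzR : RK K δ * z ≤ RK K u := by
      have := hz.2.trans (min_le_right _ _)
      rw [le_div_iff₀ hR] at this
      linarith
    have h2 : c ≤ 1 + K * RK K δ ^ 2 * z ^ 2 := by
      have : (RK K δ * z) ^ 2 ≤ RK K u ^ 2 := by gcongr
      rw [mul_pow] at this
      nlinarith
    have h3 : (1 + K * RK K δ ^ 2 * z ^ 2) ^ (-((d : ℝ) + 1) / 2) ≤ C :=
      Real.rpow_le_rpow_of_nonpos hc0 h2 (by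
        have : (0:ℝ) ≤ d := Nat.cast_nonneg d
        linarith)
    have h3' : 0 ≤ (1 + K * RK K δ ^ 2 * z ^ 2) ^ (-((d : ℝ) + 1) / 2) :=
      Real.rpow_nonneg (hc0.le.trans h2) _
    have hzz : 0 ≤ 1 - z ^ 2 := by nlinarith
    have h4' : 0 ≤ (1 - z ^ 2) ^ (((d : ℝ) - (q : ℝ)) / 2 - 1) := Real.rpow_nonneg hzz _
    have h5 : z ^ q ≤ 1 := pow_le_one₀ hz0.le hz1
    have h4 : (1 - z ^ 2) ^ (((d : ℝ) - (q : ℝ)) / 2 - 1) ≤ (1 - z) ^ (-(1/2) : ℝ) + 1 := by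
      have hqd' : (q : ℝ) + 1 ≤ d := by exact_mod_cast hqd
      rcases hz1.lt_or_eq with h | h
      · have a1 : (1 - z ^ 2) ^ (((d : ℝ) - (q : ℝ)) / 2 - 1) ≤ (1 - z ^ 2) ^ (-(1/2) : ℝ) :=
          Real.rpow_le_rpow_of_exponent_ge (by nlinarith) (by nlinarith) (by linarith)
        have a2 : (1 - z ^ 2) ^ (-(1/2) : ℝ) ≤ (1 - z) ^ (-(1/2) : ℝ) :=
          Real.rpow_le_rpow_of_nonpos (by linarith) (by nlinarith) (by norm_num)
        linarith
      · have a1 : 0 ≤ (1 - z) ^ (-(1/2) : ℝ) := Real.rpow_nonneg (by linarith) _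
        have a2 : (1 - z ^ 2) ^ (((d : ℝ) - (q : ℝ)) / 2 - 1) ≤ 1 := by
          rw [h]; norm_num
          exact Real.zero_rpow_le_one _
        linarith
    rw [Real.norm_of_nonneg (by positivity)]
    refine mul_le_mul ?_ h3 h3' (h4'.trans h4)
    calc _ ≤ 1 * (1 - z ^ 2) ^ (((d : ℝ) - (q : ℝ)) / 2 - 1) := by gcongr
      _ ≤ _ := by rw [one_mul]; exact h4
  · refine intervalIntegral.integral_mono_interval le_rfl hm0 hm1 ?_ hb
    refine (ae_restrict_iff' measurableSet_Ioc).2 (Filter.Eventually.of_forall fun z hz => ?_)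
    have : 0 ≤ (1 - z) ^ (-(1/2) : ℝ) := Real.rpow_nonneg (by linarith [hz.2]) _
    simp only [Pi.zero_apply]
    positivity

/-- all conditional positive moments are finite, i.e. for every `α > 0`
the integral `∫_0^∞ δ^α f(δ) dδ` is finite. -/
theorem positive_moments (d q γ : ℕ) (hd : 2 ≤ d) (hq1 : 1 ≤ q) (hq2 : q ≤ d - 1)
    (hγ : γ ≤ q - 1) (K u : ℝ) (hK : K < 0) (hu : 0 < u) :
    ∀ α : ℝ, 0 < α →
      MeasureTheory.IntegrableOn (fun δ : ℝ => δ ^ α * fdens d q γ K u δ)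
        (Set.Ioi (0 : ℝ)) := by
  intro α hα
  have hs : 0 < Real.sqrt (-K) := Real.sqrt_pos.2 (by linarith)
  obtain ⟨M, hM⟩ := inner_bd d q (by omega) K u hK hu
  have hM0 : 0 ≤ M := (norm_nonneg _).trans (hM 1 one_pos)
  have hmeas : Measurable (fun δ : ℝ => δ ^ α * fdens d q γ K u δ) := by
    have h1 := inner_meas d q K u
    have h2 := RK_meas K
    have h3 := Real.measurable_cosh
    unfold fdens
    refine Measurable.mul (by fun_prop) (Measurable.mul (by fun_prop) h1)
  set A := Dconst d q γ * omegaS (d - γ) / Cconst K d (d - q + γ) u with hA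
  set e := (q : ℝ) - (γ : ℝ) - 1 with he
  have he0 : 0 ≤ e := by
    have : (γ : ℝ) + 1 ≤ q := by exact_mod_cast (by omega : γ + 1 ≤ q)
    linarith
  set B := (1 / Real.sqrt (-K)) ^ e with hB
  have hB0 : 0 ≤ B := by positivity
  have hint : IntegrableOn (fun δ : ℝ => |A| * B * 4 * M *
      (δ ^ α * Real.exp (-(2 * Real.sqrt (-K)) * δ))) (Set.Ioi 0) := by
    have := integrableOn_rpow_mul_exp_neg_mul_rpow (p := 1) (s := α) (b := 2 * Real.sqrt (-K))
      (by linarith) one_pos (by positivity)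
    simp only [Real.rpow_one] at this
    exact this.const_mul _
  refine Integrable.mono' hint hmeas.aestronglyMeasurable ?_
  refine (ae_restrict_iff' measurableSet_Ioi).2 (Filter.Eventually.of_forall fun δ hδ => ?_)
  have hδ' : 0 < δ := hδ
  have hR := RK_pos hK hδ'
  have hRle : RK K δ ≤ 1 / Real.sqrt (-K) := by
    have h1 := RK_sq δ hK
    have h2 : 0 < 1 + K * RK K δ ^ 2 := by rw [h1]; positivity
    have h3 : Real.sqrt (-K) ^ 2 = -K := Real.sq_sqrt (by linarith)
    rw [le_div_iff₀ hs]
    nlinarith [mul_pos hR hs]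
  have hRe : RK K δ ^ e ≤ B := Real.rpow_le_rpow hR.le hRle he0
  have hRe0 : 0 ≤ RK K δ ^ e := Real.rpow_nonneg hR.le _
  have hcosh : (Real.cosh (Real.sqrt (-K) * δ) ^ 2)⁻¹ ≤
      4 * Real.exp (-(2 * Real.sqrt (-K)) * δ) := by
    have h1 : Real.exp (Real.sqrt (-K) * δ) / 2 ≤ Real.cosh (Real.sqrt (-K) * δ) := by
      rw [Real.cosh_eq]; linarith [Real.exp_pos (-(Real.sqrt (-K) * δ))]
    have h2 : 4 * Real.exp (-(2 * Real.sqrt (-K)) * δ)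
        = ((Real.exp (Real.sqrt (-K) * δ) / 2) ^ 2)⁻¹ := by
      rw [div_pow, ← Real.exp_nat_mul, inv_div, div_eq_mul_inv, ← Real.exp_neg]
      norm_num
      ring_nf
    rw [h2]
    gcongr
  unfold fdens
  rw [norm_mul, norm_mul, norm_mul, ← hA, ← he, div_eq_mul_inv, norm_mul,
    Real.norm_of_nonneg (Real.rpow_nonneg hδ'.le α), Real.norm_of_nonneg hRe0,
    Real.norm_of_nonneg (by positivity : 0 ≤ (Real.cosh (Real.sqrt (-K) * δ) ^ 2)⁻¹),
    Real.norm_eq_abs A]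
  have hI := hM δ hδ'
  calc _ ≤ δ ^ α * (|A| * (B * (4 * Real.exp (-(2 * Real.sqrt (-K)) * δ))) * M) := by gcongr
    _ = _ := by ring
end

section
/- Fix integers q ≥ 1 and γ with 0 ≤ γ ≤ q-1, a real u > 0, and for each integer d ≥ 2 a real K(d) < 0 with lim_{d→∞} (-K(d))·d = 0. Then lim_{d→∞} C_{K(d)}(d, d-q+γ, u) = (ω_{q-γ}/(q-γ))·u^{q-γ}; that is, under the subcritical curvature regime the normalizing constant converges to its Euclidean value. -/
open Real MeasureTheory Filter Asymptotics

theorem aux_sinh_le (x : ℝ) (hx : 0 ≤ x) : Real.sinh x ≤ x * Real.cosh x := by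
  have hm : MonotoneOn (fun y : ℝ => y * Real.cosh y - Real.sinh y) (Set.Ici 0) := by
    apply monotoneOn_of_deriv_nonneg (convex_Ici 0)
    · fun_prop
    · fun_prop
    · intro y hy
      rw [interior_Ici] at hy
      have hd : HasDerivAt (fun y : ℝ => y * Real.cosh y - Real.sinh y)
          (1 * Real.cosh y + y * Real.sinh y - Real.cosh y) y :=
        ((hasDerivAt_id y).mul (Real.hasDerivAt_cosh y)).sub (Real.hasDerivAt_sinh y)
      rw [hd.deriv]
      have hy0 : (0:ℝ) < y := hy
      have := Real.sinh_nonneg_iff.2 hy0.le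
      have := mul_nonneg hy0.le this
      linarith
  have := hm (Set.mem_Ici.2 le_rfl) (Set.mem_Ici.2 hx) hx
  simp at this
  linarith

theorem aux_bounds_s14 (s u : ℝ) (hs : 0 < s) (hu : 0 < u) (m k : ℕ) :
    u ^ (k + 1) / (k + 1) ≤ (s ^ k)⁻¹ * ∫ r in (0:ℝ)..u, Real.cosh (s * r) ^ m * Real.sinh (s * r) ^ k
    ∧ (s ^ k)⁻¹ * (∫ r in (0:ℝ)..u, Real.cosh (s * r) ^ m * Real.sinh (s * r) ^ k)
      ≤ Real.exp (s ^ 2 * (m + k) * (u ^ 2 / 2)) * (u ^ (k + 1) / (k + 1)) := by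
  have hI : ∫ r in (0:ℝ)..u, r ^ k = u ^ (k + 1) / (k + 1) := by
    rw [integral_pow]; simp
  have hc : ∀ c : ℝ, IntervalIntegrable (fun r : ℝ => c * r ^ k) volume 0 u := fun c =>
    (by fun_prop : Continuous (fun r : ℝ => c * r ^ k)).intervalIntegrable _ _
  have hg : IntervalIntegrable
      (fun r : ℝ => (s ^ k)⁻¹ * (Real.cosh (s * r) ^ m * Real.sinh (s * r) ^ k)) volume 0 u :=
    (by fun_prop : Continuous
      (fun r : ℝ => (s ^ k)⁻¹ * (Real.cosh (s * r) ^ m * Real.sinh (s * r) ^ k))).intervalIntegrable _ _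
  rw [← intervalIntegral.integral_const_mul, ← hI, ← intervalIntegral.integral_const_mul]
  have hsk : 0 < s ^ k := pow_pos hs k
  constructor
  · apply intervalIntegral.integral_mono_on hu.le (by simpa using hc 1) hg
    intro r hr
    have hsr : 0 ≤ s * r := mul_nonneg hs.le hr.1
    rw [inv_mul_eq_div, le_div_iff₀ hsk, mul_comm, ← mul_pow]
    calc (s * r) ^ k = 1 * (s * r) ^ k := (one_mul _).symm
      _ ≤ _ := by
        gcongr
        · exact one_le_pow₀ (Real.one_le_cosh _)
        · exact Real.self_le_sinh_iff.2 hsr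
  · apply intervalIntegral.integral_mono_on hu.le hg (hc _)
    intro r hr
    have hr0 := hr.1
    have hru := hr.2
    have hsr : 0 ≤ s * r := mul_nonneg hs.le hr.1
    have hsh : 0 ≤ Real.sinh (s * r) := Real.sinh_nonneg_iff.2 hsr
    have hch : Real.cosh (s * r) ≤ Real.exp (s ^ 2 * (u ^ 2 / 2)) := by
      refine (Real.cosh_le_exp_half_sq _).trans (Real.exp_le_exp.2 ?_)
      have : r ^ 2 ≤ u ^ 2 := by gcongr
      have := mul_le_mul_of_nonneg_left this (sq_nonneg s)
      nlinarith
    have hcp := Real.cosh_pos (s * r)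
    rw [inv_mul_eq_div, div_le_iff₀ hsk]
    calc Real.cosh (s * r) ^ m * Real.sinh (s * r) ^ k
        ≤ Real.cosh (s * r) ^ m * (s * r * Real.cosh (s * r)) ^ k := by
          gcongr
          exact aux_sinh_le _ hsr
      _ = Real.cosh (s * r) ^ (m + k) * (r ^ k * s ^ k) := by ring
      _ ≤ Real.exp (s ^ 2 * (u ^ 2 / 2)) ^ (m + k) * (r ^ k * s ^ k) := by gcongr
      _ = _ := by
        rw [← Real.exp_nat_mul, mul_assoc]
        congr 2
        push_cast
        ring

/-- in the subcritical regime the normalizing constant converges to its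
Euclidean value. -/
theorem Cconst_subcritical_limit (q γ : ℕ) (hq : 1 ≤ q) (hγ : γ ≤ q - 1) (u : ℝ) (hu : 0 < u)
    (K : ℕ → ℝ) (hK : ∀ d : ℕ, 2 ≤ d → K d < 0)
    (h : Tendsto (fun d : ℕ => -K d * (d : ℝ)) atTop (nhds 0)) :
    Tendsto (fun d : ℕ => Cconst (K d) d (d - q + γ) u) atTop
      (nhds (omegaS (q - γ) / ((q : ℝ) - (γ : ℝ)) * u ^ ((q : ℝ) - (γ : ℝ)))) := by
  obtain ⟨k, rfl⟩ : ∃ k, q = γ + k + 1 := ⟨q - γ - 1, by omega⟩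
  have e1 : ((γ + k + 1 : ℕ) : ℝ) - (γ : ℝ) = ((k + 1 : ℕ) : ℝ) := by push_cast; ring
  have e2 : γ + k + 1 - γ = k + 1 := by omega
  rw [e1, e2, Real.rpow_natCast]
  have key : ∀ᶠ d : ℕ in atTop, ∃ I : ℝ, Cconst (K d) d (d - (γ + k + 1) + γ) u
      = omegaS (k + 1) * I ∧ u ^ (k + 1) / (k + 1) ≤ I ∧
        I ≤ Real.exp (-K d * d * (u ^ 2 / 2)) * (u ^ (k + 1) / (k + 1)) := by
    filter_upwards [eventually_ge_atTop (γ + k + 2)] with d hd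
    have hKd := hK d (by omega)
    obtain ⟨m, hm⟩ : ∃ m, m = d - (γ + k + 1) + γ := ⟨_, rfl⟩
    have hdm : d = m + k + 1 := by omega
    rw [← hm]
    have hs : 0 < Real.sqrt (-K d) := Real.sqrt_pos.2 (by linarith)
    obtain ⟨h1, h2⟩ := aux_bounds_s14 (Real.sqrt (-K d)) u hs hu m k
    refine ⟨_, ?_, h1, h2.trans ?_⟩
    · unfold Cconst
      have a1 : d - m = k + 1 := by omega
      have a2 : -(d : ℝ) + (m : ℝ) + 1 = -(k : ℝ) := by rw [hdm]; push_cast; ring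
      rw [a1, a2, Real.rpow_neg hs.le, Real.rpow_natCast, mul_assoc, Nat.add_sub_cancel]
    · rw [Real.sq_sqrt (by linarith)]
      have : ((m : ℝ) + k) ≤ d := by rw [hdm]; push_cast; linarith
      have : 0 ≤ -K d := by linarith
      gcongr
  choose! I hI using fun d : ℕ => (show ∃ I : ℝ, (∃ I : ℝ, Cconst (K d) d (d - (γ + k + 1) + γ) u
      = omegaS (k + 1) * I ∧ u ^ (k + 1) / (k + 1) ≤ I ∧
        I ≤ Real.exp (-K d * d * (u ^ 2 / 2)) * (u ^ (k + 1) / (k + 1))) →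
      (Cconst (K d) d (d - (γ + k + 1) + γ) u
      = omegaS (k + 1) * I ∧ u ^ (k + 1) / (k + 1) ≤ I ∧
        I ≤ Real.exp (-K d * d * (u ^ 2 / 2)) * (u ^ (k + 1) / (k + 1))) by
    by_cases hh : ∃ I : ℝ, Cconst (K d) d (d - (γ + k + 1) + γ) u
      = omegaS (k + 1) * I ∧ u ^ (k + 1) / (k + 1) ≤ I ∧
        I ≤ Real.exp (-K d * d * (u ^ 2 / 2)) * (u ^ (k + 1) / (k + 1))
    · obtain ⟨I, hI⟩ := hh
      exact ⟨I, fun _ => hI⟩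
    · exact ⟨0, fun h' => absurd h' hh⟩)
  have key2 := key.mono hI
  have hlim : Tendsto (fun d : ℕ => Real.exp (-K d * d * (u ^ 2 / 2)) * (u ^ (k + 1) / (k + 1)))
      atTop (nhds (u ^ (k + 1) / ((k : ℝ) + 1))) := by
    have := ((Real.continuous_exp.tendsto _).comp (h.mul_const (u ^ 2 / 2))).mul_const
      (u ^ (k + 1) / ((k : ℝ) + 1))
    simpa using this
  have hIl : Tendsto I atTop (nhds (u ^ (k + 1) / ((k : ℝ) + 1))) :=
    tendsto_of_tendsto_of_tendsto_of_le_of_le' tendsto_const_nhds hlim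
      (key2.mono fun d hd => hd.2.1) (key2.mono fun d hd => hd.2.2)
  have hfin := (hIl.const_mul (omegaS (k + 1))).congr' (key2.mono fun d hd => hd.1.symm)
  convert hfin using 2
  push_cast
  ring
end

section
/- Fix integers q ≥ 1 and γ with 0 ≤ γ ≤ q-1, reals u > 0 and κ ∈ (0,∞), and for each integer d ≥ 2 a real K(d) < 0 with lim_{d→∞} (-K(d))·d = κ. Then lim_{d→∞} d^{(q-γ)/2} · ω_{q-γ} · ∫_0^{√(-K(d))·u} cosh^{d-q+γ}(s)·sinh^{q-γ-1}(s) ds = ω_{q-γ} · κ^{(q-γ)/2} · ∫_0^u e^{κ s²/2}·s^{q-γ-1} ds; i.e. C_{-1}(d, d-q+γ, √(-K(d))·u) is asymptotically equivalent to ω_{q-γ}·(∫_0^u e^{κ s²/2} s^{q-γ-1} ds)·κ^{(q-γ)/2}·d^{-(q-γ)/2} as d → ∞. -/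
open Real MeasureTheory Filter Asymptotics

lemma aux_sinh_s15 (a : ℕ → ℝ) (ha0 : Tendsto a atTop (nhds 0)) (hapos : ∀ᶠ d in atTop, 0 < a d)
    (r : ℝ) : Tendsto (fun d => Real.sinh (a d * r) / a d) atTop (nhds r) := by
  have hd : HasDerivAt (fun x : ℝ => Real.sinh (x * r)) r 0 := by
    have := ((hasDerivAt_id (0:ℝ)).mul_const r).sinh
    simpa using this
  rw [hasDerivAt_iff_tendsto_slope_zero] at hd
  have h1 : Tendsto a atTop (nhdsWithin 0 {0}ᶜ) := by
    refine tendsto_nhdsWithin_iff.2 ⟨ha0, ?_⟩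
    filter_upwards [hapos] with d hd using by simpa using hd.ne'
  refine (hd.comp h1).congr fun d => ?_
  simp [div_eq_inv_mul]

lemma aux_point (a : ℕ → ℝ) (ha0 : Tendsto a atTop (nhds 0)) (hapos : ∀ᶠ d in atTop, 0 < a d)
    (κ : ℝ) (h : Tendsto (fun d : ℕ => a d ^ 2 * (d : ℝ)) atTop (nhds κ)) (q γ k : ℕ)
    (hγ : γ ≤ q) (r : ℝ) :
    Tendsto (fun d : ℕ => Real.cosh (a d * r) ^ (d - q + γ) * (Real.sinh (a d * r) / a d) ^ k)
      atTop (nhds (Real.exp (κ * r ^ 2 / 2) * r ^ k)) := by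
  refine Tendsto.mul ?_ ((aux_sinh_s15 a ha0 hapos r).pow k)
  have h1 : Tendsto (fun d : ℕ => (d : ℝ) * (Real.cosh (a d * r) - 1)) atTop
      (nhds (κ * r ^ 2 / 2)) := by
    have h2 := (h.mul ((aux_sinh_s15 a ha0 hapos (r / 2)).pow 2)).const_mul 2
    have e : 2 * (κ * (r / 2) ^ 2) = κ * r ^ 2 / 2 := by ring
    rw [e] at h2
    refine h2.congr' ?_
    filter_upwards [hapos] with d hd
    have e1 : Real.cosh (a d * r) = 1 + 2 * Real.sinh (a d * (r / 2)) ^ 2 := by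
      have : a d * r = 2 * (a d * (r / 2)) := by ring
      rw [this, Real.cosh_two_mul, Real.cosh_sq]; ring
    rw [e1]
    field_simp
    ring
  have h2 := Real.tendsto_one_add_pow_exp_of_tendsto h1
  have h3 : Tendsto (fun d => Real.cosh (a d * r) ^ (q - γ)) atTop (nhds 1) := by
    have h4 : Tendsto (fun d => a d * r) atTop (nhds 0) := by simpa using ha0.mul_const r
    simpa using ((Real.continuous_cosh.tendsto 0).comp h4).pow (q - γ)
  have h5 := h2.div h3 one_ne_zero
  rw [div_one] at h5
  refine h5.congr' ?_
  filter_upwards [eventually_ge_atTop q] with d hd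
  have hc : Real.cosh (a d * r) ≠ 0 := (Real.cosh_pos _).ne'
  have e : d = (d - q + γ) + (q - γ) := by omega
  simp only [Pi.div_apply, add_sub_cancel]
  rw [div_eq_iff (pow_ne_zero _ hc), ← pow_add, ← e]

/-- asymptotics of `C_{-1}(d, d-q+γ, √(-K(d))·u)` in the critical regime. -/
theorem Cconst_critical_asymptotics (q γ : ℕ) (hq : 1 ≤ q) (hγ : γ ≤ q - 1) (u κ : ℝ)
    (hu : 0 < u) (hκ : 0 < κ) (K : ℕ → ℝ) (hK : ∀ d : ℕ, 2 ≤ d → K d < 0)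
    (h : Tendsto (fun d : ℕ => -K d * (d : ℝ)) atTop (nhds κ)) :
    Tendsto (fun d : ℕ => (d : ℝ) ^ (((q : ℝ) - (γ : ℝ)) / 2) * omegaS (q - γ) *
        ∫ s in (0:ℝ)..(Real.sqrt (-K d) * u),
          Real.cosh s ^ (d - q + γ) * Real.sinh s ^ (q - γ - 1))
      atTop
      (nhds (omegaS (q - γ) * κ ^ (((q : ℝ) - (γ : ℝ)) / 2) *
        ∫ s in (0:ℝ)..u, Real.exp (κ * s ^ 2 / 2) * s ^ ((q : ℝ) - (γ : ℝ) - 1))) := by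
  have hapos : ∀ᶠ d in atTop, 0 < Real.sqrt (-K d) := by
    filter_upwards [eventually_ge_atTop 2] with d hd
    exact Real.sqrt_pos.2 (by linarith [hK d hd])
  have hK0 : Tendsto (fun d => -K d) atTop (nhds 0) := by
    have := h.mul (tendsto_inv_atTop_zero.comp (tendsto_natCast_atTop_atTop (R := ℝ)))
    rw [mul_zero] at this
    refine this.congr' ?_
    filter_upwards [eventually_ge_atTop 1] with d hd
    have : (d : ℝ) ≠ 0 := by positivity
    simp only [Function.comp]
    field_simp
  have ha0 : Tendsto (fun d => Real.sqrt (-K d)) atTop (nhds 0) := by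
    simpa using hK0.sqrt
  have hsq : Tendsto (fun d : ℕ => Real.sqrt (-K d) ^ 2 * (d : ℝ)) atTop (nhds κ) := by
    refine h.congr' ?_
    filter_upwards [eventually_ge_atTop 2] with d hd
    rw [Real.sq_sqrt (by linarith [hK d hd])]
  obtain ⟨a, ha⟩ : ∃ a : ℕ → ℝ, a = fun d => Real.sqrt (-K d) := ⟨_, rfl⟩
  have had : ∀ d, Real.sqrt (-K d) = a d := fun d => by rw [ha]
  simp only [had] at *
  obtain ⟨k, hk⟩ : ∃ k : ℕ, q = γ + k + 1 := ⟨q - γ - 1, by omega⟩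
  have hk1 : q - γ - 1 = k := by omega
  have hγq : γ ≤ q := by omega
  have hcast : (q : ℝ) - γ = (k : ℝ) + 1 := by rw [hk]; push_cast; ring
  have hlim := aux_point a ha0 hapos κ hsq q γ k hγq
  have hint : Tendsto (fun d : ℕ => ∫ r in (0:ℝ)..u,
      Real.cosh (a d * r) ^ (d - q + γ) * (Real.sinh (a d * r) / a d) ^ k) atTop
      (nhds (∫ r in (0:ℝ)..u, Real.exp (κ * r ^ 2 / 2) * r ^ k)) := by
    refine intervalIntegral.tendsto_integral_filter_of_dominated_convergence
      (fun _ => Real.exp (κ * u ^ 2 / 2) * u ^ k + 1) ?_ ?_ (by simp) ?_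
    · refine Eventually.of_forall fun d => Continuous.aestronglyMeasurable ?_
      fun_prop
    · filter_upwards [hapos, (hlim u).eventually_le_const (lt_add_one _)] with d hd hdu
      refine Eventually.of_forall fun r hr => ?_
      rw [Set.uIoc_of_le hu.le] at hr
      have hr0 : 0 ≤ a d * r := mul_nonneg hd.le hr.1.le
      have hru : a d * r ≤ a d * u := mul_le_mul_of_nonneg_left hr.2 hd.le
      have hs : 0 ≤ Real.sinh (a d * r) := Real.sinh_nonneg_iff.2 hr0
      have hc : 0 < Real.cosh (a d * r) := Real.cosh_pos _
      have hs' : Real.sinh (a d * r) ≤ Real.sinh (a d * u) := Real.sinh_le_sinh.2 hru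
      have hc' : Real.cosh (a d * r) ≤ Real.cosh (a d * u) := by
        rw [Real.cosh_le_cosh, abs_of_nonneg hr0, abs_of_nonneg (hr0.trans hru)]
        exact hru
      rw [Real.norm_of_nonneg (by positivity)]
      refine le_trans ?_ hdu
      gcongr
    · exact Eventually.of_forall fun r _ => hlim r
  have hpre : Tendsto (fun d : ℕ => (a d ^ 2 * (d : ℝ)) ^ (((q : ℝ) - γ) / 2)) atTop
      (nhds (κ ^ (((q : ℝ) - γ) / 2))) := hsq.rpow_const (Or.inl hκ.ne')
  have hfin := (hpre.const_mul (omegaS (q - γ))).mul hint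
  have hR : ∀ s : ℝ, s ^ ((q : ℝ) - (γ : ℝ) - 1) = s ^ k := fun s => by
    rw [hcast, add_sub_cancel_right, Real.rpow_natCast]
  simp only [hR, hk1]
  refine hfin.congr' ?_
  filter_upwards [hapos] with d hd
  have e1 : (a d ^ 2 * (d : ℝ)) ^ (((q : ℝ) - γ) / 2)
      = a d ^ (k + 1) * (d : ℝ) ^ (((q : ℝ) - γ) / 2) := by
    rw [Real.mul_rpow (by positivity) (by positivity), ← Real.rpow_natCast (a d) 2,
      ← Real.rpow_mul hd.le, hcast, ← Real.rpow_natCast (a d) (k + 1)]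
    congr 2
    push_cast
    ring
  have e2 := intervalIntegral.smul_integral_comp_mul_left (a := 0) (b := u)
    (fun s => Real.cosh s ^ (d - q + γ) * Real.sinh s ^ k) (a d)
  rw [mul_zero, smul_eq_mul] at e2
  have e3 : (∫ r in (0:ℝ)..u, Real.cosh (a d * r) ^ (d - q + γ) * Real.sinh (a d * r) ^ k)
      = a d ^ k * ∫ r in (0:ℝ)..u,
        Real.cosh (a d * r) ^ (d - q + γ) * (Real.sinh (a d * r) / a d) ^ k := by
    rw [← intervalIntegral.integral_const_mul]
    congr 1
    ext r
    rw [div_pow]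
    field_simp
  rw [← e2, e3, e1]
  ring
end

section
/- Fix an integer q ≥ 1, an integer γ ≥ 0, and a real v > 0. Then lim_{d→∞} d^{(γ+1)/2} · ∫_0^{1/v} s^γ · (1 - s²v²)^{(d-q)/2 - 1} ds = Γ((γ+1)/2) · 2^{(γ-1)/2} · v^{-γ-1} (a Laplace-method asymptotic for the integral appearing in the subcritical phase). -/
open Real MeasureTheory Filter Asymptotics

theorem laplace_aux_lim (q : ℕ) (c : ℝ) :
    Tendsto (fun d : ℕ => (1 - c / (d:ℝ)) ^ (((d : ℝ) - (q : ℝ)) / 2 - 1)) atTop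
      (nhds (Real.exp (-c / 2))) := by
  have h1 : Tendsto (fun d : ℕ => (1 + (-c) / (d:ℝ)) ^ (d:ℝ)) atTop (nhds (Real.exp (-c))) :=
    (Real.tendsto_one_add_div_rpow_exp (-c)).comp tendsto_natCast_atTop_atTop
  have hinv : Tendsto (fun d : ℕ => ((d:ℝ))⁻¹) atTop (nhds 0) := tendsto_inv_atTop_nhds_zero_nat
  have h2 : Tendsto (fun d : ℕ => 1 / 2 - ((q:ℝ) / 2 + 1) * ((d:ℝ))⁻¹) atTop (nhds (1 / 2)) := by
    have := (hinv.const_mul ((q:ℝ) / 2 + 1)).const_sub (1 / 2)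
    rwa [mul_zero, sub_zero] at this
  have h3 := h1.rpow h2 (Or.inl (Real.exp_pos _).ne')
  have e : Real.exp (-c) ^ (1 / 2 : ℝ) = Real.exp (-c / 2) := by
    rw [← Real.exp_mul]; congr 1; ring
  rw [e] at h3
  refine h3.congr' ?_
  filter_upwards [eventually_ge_atTop (Nat.ceil c), eventually_gt_atTop 0] with d hd hd0
  have hd0' : (0:ℝ) < d := by exact_mod_cast hd0
  have hcd : c ≤ d := Nat.ceil_le.mp hd
  have hb : 0 ≤ 1 + -c / (d:ℝ) := by
    have : c / d ≤ 1 := (div_le_one hd0').2 hcd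
    rw [neg_div]; linarith
  rw [← Real.rpow_mul hb]
  congr 1
  · ring
  · field_simp
    ring

noncomputable def laplaceG (q γ : ℕ) (v : ℝ) (d : ℕ) : ℝ → ℝ :=
  Set.indicator (Set.Iic (Real.sqrt d / v))
    (fun t => t ^ γ * (1 - t ^ 2 * v ^ 2 / (d:ℝ)) ^ (((d : ℝ) - (q : ℝ)) / 2 - 1))

theorem laplace_aux_eq (q γ : ℕ) (v : ℝ) (hv : 0 < v) (d : ℕ) (hd : 0 < d) :
    ∫ t in Set.Ioi (0:ℝ), laplaceG q γ v d t = (d : ℝ) ^ (((γ : ℝ) + 1) / 2) *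
        ∫ s in (0:ℝ)..(1 / v), s ^ γ * (1 - s ^ 2 * v ^ 2) ^ (((d : ℝ) - (q : ℝ)) / 2 - 1) := by
  have hd' : (0:ℝ) < d := by exact_mod_cast hd
  have hs : 0 < Real.sqrt d := Real.sqrt_pos.2 hd'
  have hsq : Real.sqrt d ^ 2 = d := Real.sq_sqrt hd'.le
  unfold laplaceG
  rw [setIntegral_indicator measurableSet_Iic, Set.Ioi_inter_Iic,
    ← intervalIntegral.integral_of_le (by positivity)]
  have h := intervalIntegral.smul_integral_comp_mul_left (a := 0) (b := 1 / v)
    (fun t => t ^ γ * (1 - t ^ 2 * v ^ 2 / (d:ℝ)) ^ (((d : ℝ) - (q : ℝ)) / 2 - 1)) (Real.sqrt d)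
  rw [mul_zero, mul_one_div] at h
  rw [← h, smul_eq_mul]
  have hp : (d : ℝ) ^ (((γ : ℝ) + 1) / 2) = Real.sqrt d * Real.sqrt d ^ γ := by
    rw [Real.sqrt_eq_rpow, ← Real.rpow_natCast, ← Real.rpow_mul hd'.le, ← Real.rpow_add hd']
    congr 1; ring
  rw [hp, mul_assoc]
  congr 1
  rw [← intervalIntegral.integral_const_mul]
  apply intervalIntegral.integral_congr
  intro s _
  have : (Real.sqrt d * s) ^ 2 * v ^ 2 / (d:ℝ) = s ^ 2 * v ^ 2 := by
    rw [mul_pow, hsq]; field_simp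
  simp only [this]
  rw [mul_pow]
  ring

theorem laplace_aux_int (γ : ℕ) (v : ℝ) (hv : 0 < v) :
    ∫ t in Set.Ioi (0:ℝ), t ^ γ * Real.exp (-(t ^ 2 * v ^ 2) / 2) =
      Real.Gamma (((γ : ℝ) + 1) / 2) * (2 : ℝ) ^ (((γ : ℝ) - 1) / 2) * v ^ (-(γ : ℝ) - 1) := by
  have h := integral_rpow_mul_exp_neg_mul_rpow (p := 2) (q := γ) (b := v ^ 2 / 2) two_pos
    (by have : (0:ℝ) ≤ γ := Nat.cast_nonneg _
        linarith) (by positivity)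
  have e : ∫ t in Set.Ioi (0:ℝ), t ^ γ * Real.exp (-(t ^ 2 * v ^ 2) / 2) =
      ∫ x in Set.Ioi (0:ℝ), x ^ (γ:ℝ) * Real.exp (-(v ^ 2 / 2) * x ^ (2:ℝ)) := by
    congr 1
    funext t
    rw [Real.rpow_natCast, Real.rpow_two]
    congr 2; ring
  rw [e, h, Real.div_rpow (by positivity) two_pos.le, ← Real.rpow_natCast v 2,
    ← Real.rpow_mul hv.le]
  have e1 : ((2:ℕ):ℝ) * (-((γ:ℝ) + 1) / 2) = -(γ:ℝ) - 1 := by push_cast; ring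
  have e2 : (2:ℝ) ^ (((γ : ℝ) - 1) / 2) = 1 / 2 / 2 ^ (-((γ:ℝ) + 1) / 2) := by
    have : ((γ : ℝ) - 1) / 2 = -1 - (-((γ:ℝ) + 1) / 2) := by ring
    rw [this, Real.rpow_sub two_pos, Real.rpow_neg_one]
    norm_num
  rw [e1, e2]
  ring

theorem laplace_aux_tendsto (q γ : ℕ) (v : ℝ) (hv : 0 < v) :
    Tendsto (fun d : ℕ => ∫ t in Set.Ioi (0:ℝ), laplaceG q γ v d t) atTop
      (nhds (∫ t in Set.Ioi (0:ℝ), t ^ γ * Real.exp (-(t ^ 2 * v ^ 2) / 2))) := by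
  refine tendsto_integral_filter_of_dominated_convergence
    (fun t => t ^ (γ:ℝ) * Real.exp (-(v ^ 2 / 4) * t ^ 2)) ?_ ?_ ?_ ?_
  · refine Eventually.of_forall fun d => ?_
    refine (Measurable.indicator ?_ measurableSet_Iic).aestronglyMeasurable
    fun_prop
  · filter_upwards [eventually_ge_atTop (2 * q + 4)] with d hd
    refine (ae_restrict_mem measurableSet_Ioi).mono fun t ht => ?_
    have ht : 0 < t := ht
    have hdr : 2 * (q:ℝ) + 4 ≤ d := by exact_mod_cast hd
    have hd' : (0:ℝ) < d := by
      have : (0:ℝ) ≤ q := Nat.cast_nonneg _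
      linarith
    unfold laplaceG
    by_cases hm : t ∈ Set.Iic (Real.sqrt d / v)
    · rw [Set.indicator_of_mem hm]
      have hm : t ≤ Real.sqrt d / v := hm
      rw [le_div_iff₀ hv] at hm
      have h2 : t ^ 2 * v ^ 2 ≤ d := by
        rw [← mul_pow, ← Real.sq_sqrt hd'.le]
        gcongr
      have h3 : 0 ≤ 1 - t ^ 2 * v ^ 2 / d := by
        have := (div_le_one hd').2 h2
        linarith
      rw [Real.norm_of_nonneg (by positivity), Real.rpow_natCast]
      gcongr
      have ha : (d:ℝ) / 4 ≤ ((d : ℝ) - (q : ℝ)) / 2 - 1 := by linarith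
      have h4 : 1 - t ^ 2 * v ^ 2 / d ≤ Real.exp (-(t ^ 2 * v ^ 2 / d)) := by
        have := Real.add_one_le_exp (-(t ^ 2 * v ^ 2 / d))
        linarith
      calc _ ≤ Real.exp (-(t ^ 2 * v ^ 2 / d)) ^ (((d : ℝ) - (q : ℝ)) / 2 - 1) :=
            Real.rpow_le_rpow h3 h4 (by linarith)
        _ = Real.exp (-(t ^ 2 * v ^ 2 / d * (((d : ℝ) - (q : ℝ)) / 2 - 1))) := by
            rw [← Real.exp_mul]; congr 1; ring
        _ ≤ _ := by
            apply Real.exp_le_exp.2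
            have h5 : t ^ 2 * v ^ 2 / d * (d / 4) ≤
                t ^ 2 * v ^ 2 / d * (((d : ℝ) - (q : ℝ)) / 2 - 1) := by gcongr
            have h6 : t ^ 2 * v ^ 2 / d * (d / 4) = v ^ 2 / 4 * t ^ 2 := by field_simp
            linarith
    · rw [Set.indicator_of_notMem hm, norm_zero]
      positivity
  · exact (integrable_rpow_mul_exp_neg_mul_sq (by positivity)
      (by have : (0:ℝ) ≤ γ := Nat.cast_nonneg _
          linarith)).integrableOn
  · refine Eventually.of_forall fun t => ?_
    refine ((laplace_aux_lim q (t ^ 2 * v ^ 2)).const_mul (t ^ γ)).congr' ?_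
    have hT : Tendsto (fun d : ℕ => Real.sqrt d / v) atTop atTop :=
      (Real.tendsto_sqrt_atTop.comp tendsto_natCast_atTop_atTop).atTop_div_const hv
    filter_upwards [hT.eventually_ge_atTop t] with d hd
    unfold laplaceG
    rw [Set.indicator_of_mem (Set.mem_Iic.2 hd)]

/-- a Laplace-method asymptotic for the integral appearing in the subcritical
phase. -/
theorem laplace_asymptotics (q γ : ℕ) (hq : 1 ≤ q) (v : ℝ) (hv : 0 < v) :
    Tendsto (fun d : ℕ => (d : ℝ) ^ (((γ : ℝ) + 1) / 2) *
        ∫ s in (0:ℝ)..(1 / v), s ^ γ * (1 - s ^ 2 * v ^ 2) ^ (((d : ℝ) - (q : ℝ)) / 2 - 1))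
      atTop
      (nhds (Real.Gamma (((γ : ℝ) + 1) / 2) * (2 : ℝ) ^ (((γ : ℝ) - 1) / 2) *
        v ^ (-(γ : ℝ) - 1))) := by 
  rw [← laplace_aux_int γ v hv]
  refine (laplace_aux_tendsto q γ v hv).congr' ?_
  filter_upwards [eventually_gt_atTop 0] with d hd
  exact laplace_aux_eq q γ v hv d hd
end

section
/- Fix integers q ≥ 1 and γ with 0 ≤ γ ≤ q-1, reals u > 0 and κ ∈ (0,∞), and for each integer d ≥ 2 a real K(d) < 0 with lim_{d→∞} (-K(d))·d = κ. Then lim_{d→∞} d^{(q+1)/2} · ∫_0^1 r^{q-γ-1} · ∫_0^{min(1, tanh(√(-K(d))·u)/r)} z^q·(1-z²)^{(d-q)/2-1}·(1-r²z²)^{-(d+1)/2} dz dr = u^{q+1}·κ^{(q+1)/2} · ∫_0^1 r^{q-γ-1} ∫_0^{1/r} v^q · exp(-(1/2)·u²·κ·v²·(1-r²)) dv dr. -/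
open Real MeasureTheory Filter Asymptotics

lemma cia_pow_lim (x e : ℕ → ℝ) (t : ℝ) (hx : Tendsto x atTop (nhds 0))
    (hxe : Tendsto (fun d => e d * x d) atTop (nhds t)) :
    Tendsto (fun d => (1 - x d) ^ (e d)) atTop (nhds (Real.exp (-t))) := by
  have hd : HasDerivAt (fun y : ℝ => Real.log (1 - y)) (-1) 0 := by
    have h1 : HasDerivAt (fun y : ℝ => 1 - y) (-1) 0 := by
      simpa using (hasDerivAt_id (0:ℝ)).const_sub 1
    simpa using h1.log (by norm_num)
  have hc : Tendsto (dslope (fun y : ℝ => Real.log (1 - y)) 0) (nhds 0) (nhds (-1)) := by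
    have := (continuousAt_dslope_same.2 hd.differentiableAt).tendsto
    rwa [dslope_same, hd.deriv] at this
  have h2 := (hxe.mul (hc.comp hx))
  have h3 := (Real.continuous_exp.tendsto _).comp h2
  rw [mul_neg_one] at h3
  refine h3.congr' ?_
  filter_upwards [hx.eventually (gt_mem_nhds (show (0:ℝ) < 1 by norm_num))] with d hd1
  have := sub_smul_dslope (fun y : ℝ => Real.log (1 - y)) 0 (x d)
  simp only [sub_zero, smul_eq_mul, Real.log_one] at this
  rw [Real.rpow_def_of_pos (by linarith), ← this]
  simp only [Function.comp]
  congr 1; ring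

lemma cia_tanh (s : ℕ → ℝ) (m : ℝ) (hs : Tendsto s atTop (nhds 0))
    (hm : Tendsto (fun d : ℕ => (d:ℝ) * s d ^ 2) atTop (nhds m)) :
    Tendsto (fun d => Real.tanh (s d)) atTop (nhds 0) ∧
    Tendsto (fun d : ℕ => (d:ℝ) * Real.tanh (s d) ^ 2) atTop (nhds m) := by
  have hd : HasDerivAt Real.tanh 1 0 := by
    have : HasDerivAt (fun y : ℝ => Real.sinh y / Real.cosh y) 1 0 := by
      simpa using (Real.hasDerivAt_sinh 0).fun_div (Real.hasDerivAt_cosh 0) (by simp)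
    exact this.congr_of_eventuallyEq (Eventually.of_forall fun y => Real.tanh_eq_sinh_div_cosh y)
  constructor
  · simpa [Function.comp_def] using hd.continuousAt.tendsto.comp hs
  have hc : Tendsto (dslope Real.tanh 0) (nhds 0) (nhds 1) := by
    have := (continuousAt_dslope_same.2 hd.differentiableAt).tendsto
    rwa [dslope_same, hd.deriv] at this
  have h2 := (hm.mul ((hc.comp hs).pow 2))
  simp only [one_pow, mul_one] at h2
  refine h2.congr fun d => ?_
  have := sub_smul_dslope Real.tanh 0 (s d)
  simp only [sub_zero, smul_eq_mul, Real.tanh_zero] at this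
  rw [← this]
  simp only [Function.comp]
  ring

lemma cia_bound (t r v a b c e : ℝ) (ht : 0 < t) (ht2 : t ^ 2 ≤ 1 / 2) (hr : 0 < r) (hr1 : r ≤ 1)
    (hv : 0 < v) (hvr : v ≤ 1 / r) (hvt : v ≤ 1 / t) (ha : 0 ≤ a) (hc : c ≤ a * t ^ 2)
    (hc0 : 0 ≤ c) (he : 0 ≤ e) (hab : a + b = -e) :
    0 ≤ (1 - (t * v) ^ 2) ^ a * (1 - r ^ 2 * (t * v) ^ 2) ^ b ∧
    (1 - (t * v) ^ 2) ^ a * (1 - r ^ 2 * (t * v) ^ 2) ^ b ≤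
      2 ^ e * Real.exp c * Real.exp (-c * v ^ 2) := by
  have hrv : v * r ≤ 1 := (le_div_iff₀ hr).1 hvr
  have htv : v * t ≤ 1 := (le_div_iff₀ ht).1 hvt
  have hrv2 : (v * r) ^ 2 ≤ 1 := pow_le_one₀ (by positivity) hrv
  have htv2 : (v * t) ^ 2 ≤ 1 := pow_le_one₀ (by positivity) htv
  have hr2 : r ^ 2 ≤ 1 := pow_le_one₀ hr.le hr1
  have hx : (t * v) ^ 2 = t ^ 2 * v ^ 2 := by ring
  set x := (t * v) ^ 2 with hxd
  have hx0 : 0 ≤ x := by positivity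
  have hx1 : x ≤ 1 := by rw [hxd, mul_comm]; exact htv2
  have hy : r ^ 2 * x ≤ 1 / 2 := by
    have : r ^ 2 * x = (v * r) ^ 2 * t ^ 2 := by rw [hxd]; ring
    rw [this]
    nlinarith [sq_nonneg t]
  set y := 1 - r ^ 2 * x with hyd
  have hy2 : 1 / 2 ≤ y := by linarith
  have hy0 : 0 < y := by linarith
  have hx1' : 0 ≤ 1 - x := by linarith
  refine ⟨by positivity, ?_⟩
  have key : 1 - x ≤ y * Real.exp (-(x * (1 - r ^ 2))) := by
    have h1 : 1 - x * (1 - r ^ 2) ≤ Real.exp (-(x * (1 - r ^ 2))) := by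
      have := Real.add_one_le_exp (-(x * (1 - r ^ 2)))
      linarith
    have h2 := mul_le_mul_of_nonneg_left h1 hy0.le
    have h3 : 0 ≤ r ^ 2 * x ^ 2 * (1 - r ^ 2) := mul_nonneg (by positivity) (by linarith)
    nlinarith
  have k2 : (1 - x) ^ a ≤ y ^ a * Real.exp (-(x * (1 - r ^ 2)) * a) := by
    rw [Real.exp_mul, ← Real.mul_rpow hy0.le (Real.exp_pos _).le]
    exact Real.rpow_le_rpow hx1' key ha
  have k3 : y ^ a * y ^ b ≤ 2 ^ e := by
    rw [← Real.rpow_add hy0, hab]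
    calc y ^ (-e) ≤ (1 / 2 : ℝ) ^ (-e) :=
          Real.rpow_le_rpow_of_nonpos (by norm_num) hy2 (by linarith)
      _ = 2 ^ e := by
          rw [Real.rpow_neg (by norm_num), one_div, Real.inv_rpow (by norm_num), inv_inv]
  have k4 : Real.exp (-(x * (1 - r ^ 2)) * a) ≤ Real.exp c * Real.exp (-c * v ^ 2) := by
    rw [← Real.exp_add]
    apply Real.exp_le_exp.2
    have h1 : 0 ≤ v ^ 2 * (1 - r ^ 2) := mul_nonneg (by positivity) (by linarith)
    have h2 := mul_le_mul_of_nonneg_right hc h1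
    have h3 : c * (v * r) ^ 2 ≤ c * 1 := mul_le_mul_of_nonneg_left hrv2 hc0
    rw [hx]
    nlinarith
  calc (1 - x) ^ a * y ^ b ≤ (y ^ a * Real.exp (-(x * (1 - r ^ 2)) * a)) * y ^ b := by gcongr
    _ = (y ^ a * y ^ b) * Real.exp (-(x * (1 - r ^ 2)) * a) := by ring
    _ ≤ 2 ^ e * (Real.exp c * Real.exp (-c * v ^ 2)) := by gcongr
    _ = _ := by ring

noncomputable def ciaG (q : ℕ) (t a b r v : ℝ) : ℝ :=
  if v ≤ 1 / t ∧ v ≤ 1 / r then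
    v ^ q * ((1 - (t * v) ^ 2) ^ a * (1 - r ^ 2 * (t * v) ^ 2) ^ b) else 0

lemma ciaG_meas (q : ℕ) (t a b : ℝ) : Measurable (Function.uncurry (ciaG q t a b)) := by
  unfold ciaG Function.uncurry
  refine Measurable.ite ?_ (by fun_prop) measurable_const
  have h1 : MeasurableSet {x : ℝ × ℝ | x.2 ≤ 1 / t} := measurableSet_le (by fun_prop) (by fun_prop)
  have h2 : MeasurableSet {x : ℝ × ℝ | x.2 ≤ 1 / x.1} :=
    measurableSet_le (by fun_prop) (measurable_const.div measurable_fst)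
  exact h1.inter h2

lemma cia_subst (q : ℕ) (t a b r : ℝ) (ht : 0 < t) (hr : 0 < r) :
    ∫ z in (0:ℝ)..(min 1 (t / r)), z ^ q * (1 - z ^ 2) ^ a * (1 - r ^ 2 * z ^ 2) ^ b
      = t ^ (q + 1) * ∫ v in Set.Ioi (0:ℝ), ciaG q t a b r v := by
  have hmin : 0 ≤ min (1 / t) (1 / r) := by positivity
  have h1 : ∫ v in Set.Ioi (0:ℝ), ciaG q t a b r v =
      ∫ v in (0:ℝ)..(min (1 / t) (1 / r)),
        v ^ q * ((1 - (t * v) ^ 2) ^ a * (1 - r ^ 2 * (t * v) ^ 2) ^ b) := by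
    rw [intervalIntegral.integral_of_le hmin, ← Set.Ioi_inter_Iic,
      ← setIntegral_indicator measurableSet_Iic]
    congr 1
    ext v
    simp [ciaG, Set.indicator]
  have h2 : t * min (1 / t) (1 / r) = min 1 (t / r) := by
    rw [mul_min_of_nonneg _ _ ht.le]
    congr 1 <;> field_simp
  have h3 := intervalIntegral.mul_integral_comp_mul_left (a := 0) (b := min (1 / t) (1 / r))
    (f := fun z : ℝ => z ^ q * (1 - z ^ 2) ^ a * (1 - r ^ 2 * z ^ 2) ^ b) (c := t)
  rw [mul_zero, h2] at h3
  rw [← h3, h1, pow_succ' t q, mul_assoc, ← intervalIntegral.integral_const_mul (t ^ q)]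
  congr 1
  refine intervalIntegral.integral_congr fun v _ => ?_
  beta_reduce
  ring

lemma cia_limit_form (q : ℕ) (m r : ℝ) (hr : 0 < r) :
    ∫ v in Set.Ioi (0:ℝ), (if v ≤ 1 / r then 
        v ^ q * Real.exp (-(1 / 2) * m * v ^ 2 * (1 - r ^ 2)) else 0) =
    ∫ v in (0:ℝ)..(1 / r), v ^ q * Real.exp (-(1 / 2) * m * v ^ 2 * (1 - r ^ 2)) := by
  rw [intervalIntegral.integral_of_le (by positivity), ← Set.Ioi_inter_Iic,
      ← setIntegral_indicator measurableSet_Iic]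
  congr 1

lemma cia_main (q : ℕ) (p : ℝ) (hp : 0 ≤ p) (m : ℝ) (hm : 0 < m) (T a b : ℕ → ℝ) (e : ℝ) (he : 0 ≤ e)
    (hT : ∀ᶠ d in atTop, 0 < T d) (hT0 : Tendsto T atTop (nhds 0))
    (ha : Tendsto (fun d => a d * T d ^ 2) atTop (nhds (m / 2)))
    (hab : ∀ d, a d + b d = -e) :
    Tendsto (fun d => ∫ r in (0:ℝ)..1, r ^ p * ∫ v in Set.Ioi (0:ℝ), ciaG q (T d) (a d) (b d) r v)
      atTop (nhds (∫ r in (0:ℝ)..1, r ^ p * ∫ v in (0:ℝ)..(1 / r),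
        v ^ q * Real.exp (-(1 / 2) * m * v ^ 2 * (1 - r ^ 2)))) := by
  set B : ℝ → ℝ := fun v => v ^ q * (2 ^ e * Real.exp (m / 4) * Real.exp (-(m / 4) * v ^ 2)) with hB
  have hBi : IntegrableOn B (Set.Ioi 0) := by
    have := (integrable_rpow_mul_exp_neg_mul_sq (b := m / 4) (by positivity) (s := (q:ℝ))
      (by have := Nat.cast_nonneg (α := ℝ) q; linarith)).const_mul (2 ^ e * Real.exp (m / 4))
    refine (this.congr (Eventually.of_forall fun v => ?_)).integrableOn
    simp only [hB, Real.rpow_natCast]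
    ring
  have hT2 : Tendsto (fun d => T d ^ 2) atTop (nhds 0) := by simpa using hT0.pow 2
  have hev : ∀ᶠ d in atTop, ∀ r ∈ Set.Ioc (0:ℝ) 1, ∀ v ∈ Set.Ioi (0:ℝ),
      ‖ciaG q (T d) (a d) (b d) r v‖ ≤ B v := by
    filter_upwards [hT, hT2.eventually (gt_mem_nhds (show (0:ℝ) < 1 / 2 by norm_num)),
      ha.eventually (lt_mem_nhds (show m / 4 < m / 2 by linarith))] with d h1 h2 h3 r hr v hv
    have hv' : (0:ℝ) < v := hv
    have hB0 : 0 ≤ B v := by simp only [hB]; positivity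
    unfold ciaG
    split_ifs with hc
    · have ha0 : 0 ≤ a d := by
        by_contra hn
        push Not at hn
        nlinarith [sq_nonneg (T d)]
      obtain ⟨k1, k2⟩ := cia_bound (T d) r v (a d) (b d) (m / 4) e h1 h2.le hr.1 hr.2 hv hc.2 hc.1
        ha0 h3.le (by positivity) he (hab d)
      rw [Real.norm_of_nonneg (by positivity)]
      simp only [hB]
      gcongr
    · simpa using hB0
  have hb : Tendsto (fun d => b d * T d ^ 2) atTop (nhds (-(m / 2))) := by
    have := (hT2.const_mul (-e)).sub ha
    simp only [mul_zero, zero_sub] at this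
    refine this.congr fun d => ?_
    rw [← hab d]; ring
  have hlim : ∀ r ∈ Set.Ioc (0:ℝ) 1, Tendsto (fun d => ∫ v in Set.Ioi (0:ℝ),
      ciaG q (T d) (a d) (b d) r v) atTop (nhds (∫ v in (0:ℝ)..(1 / r),
        v ^ q * Real.exp (-(1 / 2) * m * v ^ 2 * (1 - r ^ 2)))) := by
    intro r hr
    rw [← cia_limit_form q m r hr.1]
    refine tendsto_integral_filter_of_dominated_convergence B ?_ ?_ hBi ?_
    · refine Eventually.of_forall fun d => ?_
      exact ((ciaG_meas q (T d) (a d) (b d)).comp measurable_prodMk_left).aestronglyMeasurable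
    · filter_upwards [hev] with d hd
      filter_upwards [ae_restrict_mem measurableSet_Ioi] with v hv using hd r hr v hv
    · filter_upwards [ae_restrict_mem measurableSet_Ioi] with v hv
      have hv' : (0:ℝ) < v := hv
      by_cases hvr : v ≤ 1 / r
      · simp only [hvr, if_true]
        have e1 := cia_pow_lim (fun d => (T d * v) ^ 2) a (m / 2 * v ^ 2)
          (by simpa [mul_pow] using hT2.mul_const (v ^ 2))
          ((ha.mul_const (v ^ 2)).congr fun d => by ring)
        have e2 := cia_pow_lim (fun d => r ^ 2 * (T d * v) ^ 2) b (-(m / 2) * (r ^ 2 * v ^ 2))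
          (by simpa using (hT2.mul_const (r ^ 2 * v ^ 2)).congr fun d => by
                show _ = r ^ 2 * (T d * v) ^ 2
                ring)
          ((hb.mul_const (r ^ 2 * v ^ 2)).congr fun d => by ring)
        have e3 := (e1.mul e2).const_mul (v ^ q)
        rw [← Real.exp_add, show -(m / 2 * v ^ 2) + -(-(m / 2) * (r ^ 2 * v ^ 2)) =
          -(1 / 2) * m * v ^ 2 * (1 - r ^ 2) by ring] at e3
        refine e3.congr' ?_
        filter_upwards [hT, (hT0.mul_const v).eventually
          (gt_mem_nhds (show 0 * v < 1 by simp))] with d h1 h2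
        have : v ≤ 1 / T d := by
          rw [le_div_iff₀ h1]; linarith
        simp only [ciaG, this, hvr, and_self, if_true]
      · simp only [hvr, if_false, ciaG, and_false]
        exact tendsto_const_nhds
  refine intervalIntegral.tendsto_integral_filter_of_dominated_convergence
    (fun _ => ∫ v in Set.Ioi (0:ℝ), B v) ?_ ?_ intervalIntegrable_const ?_
  · refine Eventually.of_forall fun d => ?_
    have := ((ciaG_meas q (T d) (a d) (b d)).stronglyMeasurable.integral_prod_right 
      (ν := volume.restrict (Set.Ioi (0:ℝ)))).measurable
    exact ((measurable_id.pow_const p).mul this).aestronglyMeasurable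
  · filter_upwards [hev] with d hd
    refine Eventually.of_forall fun r hr => ?_
    rw [Set.uIoc_of_le zero_le_one] at hr
    rw [norm_mul]
    have h1 : ‖r ^ p‖ ≤ 1 := by
      rw [Real.norm_of_nonneg (Real.rpow_nonneg hr.1.le p)]
      exact Real.rpow_le_one hr.1.le hr.2 hp
    have h2 : ‖∫ v in Set.Ioi (0:ℝ), ciaG q (T d) (a d) (b d) r v‖ ≤ ∫ v in Set.Ioi (0:ℝ), B v := by
      refine norm_integral_le_of_norm_le hBi ?_
      filter_upwards [ae_restrict_mem measurableSet_Ioi] with v hv using hd r hr v hv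
    calc _ ≤ 1 * ∫ v in Set.Ioi (0:ℝ), B v := mul_le_mul h1 h2 (norm_nonneg _) zero_le_one
      _ = _ := one_mul _
  · refine Eventually.of_forall fun r hr => ?_
    rw [Set.uIoc_of_le zero_le_one] at hr
    exact (hlim r hr).const_mul _

/-- exact asymptotics of the double integral in the critical regime. -/
theorem critical_integral_asymptotics (q γ : ℕ) (hq : 1 ≤ q) (hγ : γ ≤ q - 1) (u κ : ℝ)
    (hu : 0 < u) (hκ : 0 < κ) (K : ℕ → ℝ) (hK : ∀ d : ℕ, 2 ≤ d → K d < 0)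
    (h : Tendsto (fun d : ℕ => -K d * (d : ℝ)) atTop (nhds κ)) :
    Tendsto (fun d : ℕ => (d : ℝ) ^ (((q : ℝ) + 1) / 2) *
        ∫ r in (0:ℝ)..1,
          r ^ ((q : ℝ) - (γ : ℝ) - 1) *
            ∫ z in (0:ℝ)..(min 1 (Real.tanh (Real.sqrt (-K d) * u) / r)),
              z ^ q * (1 - z ^ 2) ^ (((d : ℝ) - (q : ℝ)) / 2 - 1) *
                (1 - r ^ 2 * z ^ 2) ^ (-((d : ℝ) + 1) / 2))
      atTop
      (nhds (u ^ (q + 1) * κ ^ (((q : ℝ) + 1) / 2) *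
        ∫ r in (0:ℝ)..1,
          r ^ ((q : ℝ) - (γ : ℝ) - 1) *
            ∫ v in (0:ℝ)..(1 / r),
              v ^ q * Real.exp (-(1 / 2) * u ^ 2 * κ * v ^ 2 * (1 - r ^ 2)))) := by
  set T : ℕ → ℝ := fun d => Real.tanh (Real.sqrt (-K d) * u) with hTd
  have hcast : Tendsto (fun d : ℕ => (d:ℝ)) atTop atTop := tendsto_natCast_atTop_atTop
  have hK0 : Tendsto (fun d : ℕ => -K d) atTop (nhds 0) := by
    have := h.mul (tendsto_inv_atTop_zero.comp hcast)
    rw [mul_zero] at this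
    refine this.congr' ?_
    filter_upwards [eventually_ge_atTop 1] with d hd
    have : (d:ℝ) ≠ 0 := by positivity
    simp only [Function.comp]
    field_simp
  have hs0 : Tendsto (fun d : ℕ => Real.sqrt (-K d) * u) atTop (nhds 0) := by
    simpa using ((Real.continuous_sqrt.tendsto 0).comp hK0).mul_const u
  have hsm : Tendsto (fun d : ℕ => (d:ℝ) * (Real.sqrt (-K d) * u) ^ 2) atTop
      (nhds (u ^ 2 * κ)) := by
    refine (h.const_mul (u ^ 2)).congr' ?_
    filter_upwards [eventually_ge_atTop 2] with d hd
    rw [mul_pow, Real.sq_sqrt (by linarith [hK d hd])]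
    ring
  obtain ⟨hT0, hTm⟩ := cia_tanh _ _ hs0 hsm
  change Tendsto T atTop (nhds 0) at hT0
  change Tendsto (fun d : ℕ => (d:ℝ) * T d ^ 2) atTop _ at hTm
  have hT : ∀ᶠ d in atTop, 0 < T d := by
    filter_upwards [eventually_ge_atTop 2] with d hd
    have h1 : 0 < Real.sqrt (-K d) * u := mul_pos (Real.sqrt_pos.2 (by linarith [hK d hd])) hu
    simp only [hTd]
    rw [Real.tanh_eq_sinh_div_cosh]
    exact div_pos (Real.sinh_pos_iff.2 h1) (Real.cosh_pos _)
  have ha : Tendsto (fun d : ℕ => (((d:ℝ) - q) / 2 - 1) * T d ^ 2) atTop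
      (nhds (u ^ 2 * κ / 2)) := by
    have h1 : Tendsto (fun d => T d ^ 2) atTop (nhds 0) := by simpa using hT0.pow 2
    have := (hTm.div_const 2).sub (h1.const_mul ((q:ℝ) / 2 + 1))
    rw [mul_zero, sub_zero] at this
    exact this.congr fun d => by ring
  have hp : (0:ℝ) ≤ (q:ℝ) - γ - 1 := by
    have : γ + 1 ≤ q := by omega
    have : (γ:ℝ) + 1 ≤ q := by exact_mod_cast this
    linarith
  have main := cia_main q ((q:ℝ) - γ - 1) hp (u ^ 2 * κ) (by positivity) T
    (fun d => ((d:ℝ) - q) / 2 - 1) (fun d => -((d:ℝ) + 1) / 2) (((q:ℝ) + 3) / 2) (by positivity)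
    hT hT0 ha (fun d => by ring)
  have hpre : Tendsto (fun d : ℕ => ((d:ℝ) * T d ^ 2) ^ (((q:ℝ) + 1) / 2)) atTop
      (nhds ((u ^ 2 * κ) ^ (((q:ℝ) + 1) / 2))) :=
    hTm.rpow_const (Or.inr (by positivity))
  have hsq : ∀ x : ℝ, 0 < x → (x ^ 2) ^ (((q:ℝ) + 1) / 2) = x ^ (q + 1) := by
    intro x hx
    rw [← Real.rpow_natCast, ← Real.rpow_mul hx.le, ← Real.rpow_natCast]
    congr 1
    push_cast
    ring
  have fin := hpre.mul main
  rw [Real.mul_rpow (by positivity) hκ.le, hsq u hu] at fin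
  simp only [← mul_assoc] at fin ⊢
  refine fin.congr' ?_
  filter_upwards [hT] with d hd
  rw [Real.mul_rpow (by positivity) (by positivity), hsq _ hd, mul_assoc,
    ← intervalIntegral.integral_const_mul]
  congr 1
  refine intervalIntegral.integral_congr_ae (Eventually.of_forall fun r hr => ?_)
  rw [Set.uIoc_of_le zero_le_one] at hr
  have := cia_subst q (T d) (((d:ℝ) - q) / 2 - 1) (-((d:ℝ) + 1) / 2) r hd hr.1
  simp only [hTd] at this ⊢
  rw [this]
  ring
end
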